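/- arXiv:2307.14600 — 8 statements merged into one kernel-verified Lean document; each statement's English description precedes it below -/
import Mathlib

section
/- Let μ be a non-degenerate probability measure on ℝ, symmetric about 0, satisfying E_μ[exp(λ|X|^p)] < ∞ for all λ > 0 with some p ≥ 2, and assume α''(x) ≤ α''(y) whenever |x| ≥ |y|. For θ ≥ 0 with 2θ > 1/α''(0) and B = 0, define 𝔳_{θ,0}(x) := θx² − xβ(x) + α(β(x)) for x ∈ cl(N). Then the set of global maximizers of 𝔳_{θ,0} on cl(N) is exactly {−t, t} for some t > 0, and t satisfies t = α'(2θt). -/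
/-!
The proof avoids any analysis of `𝔳_{θ,0}` at the endpoints of `N` by a Fenchel-type comparison.
Write `α` for the log-mgf. For every `x` and every `s` one has `γ(β(x)) ≥ s x − α(s)`: inside `N`
this is the tangent-line inequality for the convex function `α`, outside `N` it is the bound
`∫ e^{s y} dμ(y) ≥ e^{s x} μ({x})` (`le_gb`). With `s = 2θx` this gives `𝔳_{θ,0}(x) ≤ H(x)`, where
`H(x) = α(2θx) − θx²`, and equality holds whenever `x = α'(2θx)` (`vFn_le`, `vFn_eq`).

It remains to see that `H` has exactly two global maximizers `±t` on `ℝ`, and that they satisfy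
`t = α'(2θt)`. In the variable `s = 2θx` this concerns `G(s) = α(s) − s²/(4θ)`, an even function
with `G'(s) = α'(s) − s/(2θ)`. The monotonicity of `α''` makes `G'` concave on `[0,∞)`; moreover
`G'(0) = 0` and `G''(0) > 0`. The tail condition with `p ≥ 2` gives `α(s) ≤ s²/(8θ) + C`, so `G'`
cannot stay positive. Hence `G'` is positive on `(0, s₀)` and negative on `(s₀, ∞)` for a unique
`s₀ > 0` (`exists_unique_max`), and `t = s₀/(2θ)`.
-/

open MeasureTheory Filter Set
open scoped ENNReal NNReal

noncomputable section

namespace GibbsMulti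

/-- The log moment generating function `α(θ) = log ∫ e^{θx} dμ(x)`. -/
def cgf (μ : Measure ℝ) (θ : ℝ) : ℝ := Real.log (∫ x, Real.exp (θ * x) ∂μ)

/-- `α'`, the derivative of the log-mgf. -/
def cgf' (μ : Measure ℝ) : ℝ → ℝ := deriv (cgf μ)

/-- `N = α'(ℝ)`. -/
def Ndom (μ : Measure ℝ) : Set ℝ := Set.range (cgf' μ)

/-- `β`, the inverse of `α'` on `N`. -/
def betaInv (μ : Measure ℝ) : ℝ → ℝ := Function.invFun (cgf' μ)

/-- `γ(θ) = θ α'(θ) − α(θ)`. -/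
def gammaFn (μ : Measure ℝ) (θ : ℝ) : ℝ := θ * cgf' μ θ - cgf μ θ

open Classical in
/-- The extended function `γ∘β : cl(N) → [0,∞]`, with values `D(δ_t‖μ) = −log μ({t})`
at the endpoints of `N` (which is `∞` when `μ({t}) = 0`). -/
def gb (μ : Measure ℝ) (t : ℝ) : ℝ≥0∞ :=
  if t ∈ Ndom μ then ENNReal.ofReal (gammaFn μ (betaInv μ t))
  else if μ {t} = 0 then ⊤ else ENNReal.ofReal (- Real.log (μ {t}).toReal)

/-- `μ` is non-degenerate. -/
def Nondeg (μ : Measure ℝ) : Prop := ∀ c : ℝ, μ ≠ Measure.dirac c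

/-- Tail condition with (finite) exponent `p`: `E_μ[exp(λ |X|^p)] < ∞` for every `λ > 0`. -/
def TailCond (μ : Measure ℝ) (p : ℝ) : Prop :=
  ∀ l : ℝ, 0 < l → Integrable (fun x => Real.exp (l * |x| ^ p)) μ

/-- `μ` is stochastically non-negative. -/
def StochNonneg (μ : Measure ℝ) : Prop :=
  ∀ t : ℝ, 0 < t → -t ∈ Ndom μ →
    t ∈ Ndom μ ∧ gammaFn μ (betaInv μ t) ≤ gammaFn μ (betaInv μ (-t))

/-- The function `𝔳_{θ,B}(x) = θx² + Bx − γ(β(x))`, with value `−∞` where `γ(β(x)) = ∞`,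
as an extended-real valued function. -/
def vFn (μ : Measure ℝ) (θ B : ℝ) (x : ℝ) : EReal :=
  ((θ * x ^ 2 + B * x : ℝ) : EReal) - ((gb μ x : ℝ≥0∞) : EReal)

/-! ### Exponential moments and growth of the log-mgf -/

/-- The tail condition with exponent `p ≥ 2` makes every Gaussian exponential moment finite. -/
lemma integrable_exp_sq (μ : Measure ℝ) [IsProbabilityMeasure μ] (p : ℝ) (hp : 2 ≤ p)
    (htail : TailCond μ p) (l : ℝ) (hl : 0 < l) :
    Integrable (fun x => Real.exp (l * x ^ 2)) μ := by
  refine ((htail l hl).const_mul (Real.exp l)).mono' (by fun_prop) (ae_of_all _ fun x => ?_)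
  rw [Real.norm_eq_abs, Real.abs_exp, ← Real.exp_add]
  apply Real.exp_le_exp.mpr
  have h : x ^ 2 ≤ 1 + |x| ^ p := by
    rcases le_total |x| 1 with h1 | h1
    · have : x ^ 2 ≤ 1 := by rw [← sq_abs]; exact pow_le_one₀ (abs_nonneg x) h1
      have := Real.rpow_nonneg (abs_nonneg x) p
      linarith
    · have h2 := Real.rpow_le_rpow_of_exponent_le h1 hp
      rw [Real.rpow_two, sq_abs] at h2
      linarith
  nlinarith

/-- Completing the square: `s x ≤ l x² + s²/(4l)`. -/
lemma mul_le_sq_add (l : ℝ) (hl : 0 < l) (s x : ℝ) : s * x ≤ s ^ 2 / (4 * l) + l * x ^ 2 := by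
  have h : s ^ 2 / (4 * l) + l * x ^ 2 - s * x = (s - 2 * l * x) ^ 2 / (4 * l) := by
    field_simp
    ring
  have : 0 ≤ (s - 2 * l * x) ^ 2 / (4 * l) := by positivity
  linarith

lemma integrable_exp_mul_id (μ : Measure ℝ) [IsProbabilityMeasure μ] (p : ℝ) (hp : 2 ≤ p)
    (htail : TailCond μ p) (s : ℝ) : Integrable (fun x => Real.exp (s * x)) μ := by
  refine ((integrable_exp_sq μ p hp htail 1 one_pos).const_mul
    (Real.exp (s ^ 2 / (4 * 1)))).mono' (by fun_prop) (ae_of_all _ fun x => ?_)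
  rw [Real.norm_eq_abs, Real.abs_exp, ← Real.exp_add]
  exact Real.exp_le_exp.mpr (mul_le_sq_add 1 one_pos s x)

/-- The log-mgf is dominated by an arbitrarily small quadratic, up to a constant. -/
lemma cgf_le_quadratic (μ : Measure ℝ) [IsProbabilityMeasure μ] (p : ℝ) (hp : 2 ≤ p)
    (htail : TailCond μ p) (l : ℝ) (hl : 0 < l) :
    ∃ C, ∀ s, cgf μ s ≤ s ^ 2 / (4 * l) + C := by
  have hI := integrable_exp_sq μ p hp htail l hl
  refine ⟨Real.log (∫ x, Real.exp (l * x ^ 2) ∂μ), fun s => ?_⟩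
  have hpos : 0 < ∫ x, Real.exp (l * x ^ 2) ∂μ := integral_exp_pos hI
  have hs := integrable_exp_mul_id μ p hp htail s
  have h1 : ∫ x, Real.exp (s * x) ∂μ
      ≤ Real.exp (s ^ 2 / (4 * l)) * ∫ x, Real.exp (l * x ^ 2) ∂μ := by
    rw [← integral_const_mul]
    refine integral_mono hs (hI.const_mul _) fun x => ?_
    change Real.exp _ ≤ Real.exp _ * Real.exp _
    rw [← Real.exp_add]
    exact Real.exp_le_exp.mpr (mul_le_sq_add l hl s x)
  have h2 := Real.log_le_log (integral_exp_pos hs) h1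
  rwa [Real.log_mul (Real.exp_pos _).ne' hpos.ne', Real.log_exp] at h2

/-! ### Regularity, convexity and symmetry of the log-mgf -/

lemma cgf_eq (μ : Measure ℝ) : cgf μ = ProbabilityTheory.cgf id μ := rfl

lemma mem_interior (μ : Measure ℝ) (hI : ∀ s, Integrable (fun x => Real.exp (s * x)) μ) (s : ℝ) :
    s ∈ interior (ProbabilityTheory.integrableExpSet id μ) := by
  have : ProbabilityTheory.integrableExpSet id μ = univ := eq_univ_of_forall fun t => hI t
  simp [this]

lemma analyticAt_cgf' (μ : Measure ℝ) (hI : ∀ s, Integrable (fun x => Real.exp (s * x)) μ)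
    (s : ℝ) : AnalyticAt ℝ (cgf μ) s :=
  ProbabilityTheory.analyticAt_cgf (mem_interior μ hI s)

lemma deriv2_cgf_nonneg (μ : Measure ℝ) (hI : ∀ s, Integrable (fun x => Real.exp (s * x)) μ)
    (s : ℝ) : 0 ≤ deriv (deriv (cgf μ)) s := by
  have h := ProbabilityTheory.variance_tilted_mul (mem_interior μ hI s)
  rw [iteratedDeriv_succ, iteratedDeriv_one, ← cgf_eq] at h
  rw [← h]
  exact ProbabilityTheory.variance_nonneg _ _

/-- `α''(0)` is the variance of `μ`, which is positive for a non-degenerate `μ`. -/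
lemma deriv2_cgf_zero_pos (μ : Measure ℝ) [IsProbabilityMeasure μ] (hND : Nondeg μ)
    (hI : ∀ s, Integrable (fun x => Real.exp (s * x)) μ) : 0 < deriv (deriv (cgf μ)) 0 := by
  refine (deriv2_cgf_nonneg μ hI 0).lt_of_ne' fun h0 => ?_
  have h := ProbabilityTheory.variance_tilted_mul (mem_interior μ hI 0)
  rw [iteratedDeriv_succ, iteratedDeriv_one, ← cgf_eq, h0] at h
  have hμ : μ.tilted (fun x => 0 * id x) = μ := by simp
  have hL := ProbabilityTheory.memLp_tilted_mul (mem_interior μ hI 0) 2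
  rw [hμ] at h hL
  have hae := ProbabilityTheory.ae_eq_integral_of_variance_eq_zero (by exact_mod_cast hL) h
  apply hND (∫ x, id x ∂μ)
  have h2 : μ.map id = μ.map (fun _ => ∫ x, id x ∂μ) := Measure.map_congr hae
  simpa [Measure.map_const] using h2

lemma cgf_neg (μ : Measure ℝ) (hsym : μ.map (fun x : ℝ => -x) = μ) (s : ℝ) :
    cgf μ (-s) = cgf μ s := by
  unfold cgf
  congr 1
  conv_rhs => rw [← hsym]
  rw [integral_map (by fun_prop) (by fun_prop)]
  simp

lemma cgf'_neg (μ : Measure ℝ) (hsym : μ.map (fun x : ℝ => -x) = μ) (s : ℝ) :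
    cgf' μ (-s) = -cgf' μ s := by
  have h : (fun x => cgf μ (-x)) = cgf μ := funext (cgf_neg μ hsym)
  have h2 := deriv_comp_neg (cgf μ) s
  rw [h] at h2
  unfold cgf'
  linarith

/-- The tangent-line inequality for a convex function on `ℝ`. -/
lemma tangent_le {f : ℝ → ℝ} (hf : ConvexOn ℝ univ f) (hd : Differentiable ℝ f) (u s : ℝ) :
    f u + (s - u) * deriv f u ≤ f s := by
  rcases lt_trichotomy u s with h | h | h
  · have := hf.deriv_le_slope (mem_univ u) (mem_univ s) h (hd u)
    rw [slope_def_field, le_div_iff₀ (by linarith)] at this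
    linarith
  · simp [h]
  · have := hf.slope_le_deriv (mem_univ s) (mem_univ u) h (hd u)
    rw [slope_def_field, div_le_iff₀ (by linarith)] at this
    linarith

lemma convexOn_cgf (μ : Measure ℝ) (hI : ∀ s, Integrable (fun x => Real.exp (s * x)) μ) :
    ConvexOn ℝ univ (cgf μ) :=
  convexOn_univ_of_deriv2_nonneg (fun s => (analyticAt_cgf' μ hI s).differentiableAt)
    (fun s => (analyticAt_cgf' μ hI s).deriv.differentiableAt)
    (fun s => by simpa using deriv2_cgf_nonneg μ hI s)

/-! ### Fenchel comparison for `𝔳_{θ,0}` -/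

/-- On `N`, the function `γ ∘ β` dominates every affine function `x ↦ s x − α(s)`. -/
lemma le_gamma (μ : Measure ℝ) (hI : ∀ s, Integrable (fun x => Real.exp (s * x)) μ) (x s : ℝ)
    (hx : x ∈ Ndom μ) : s * x - cgf μ s ≤ gammaFn μ (betaInv μ x) := by
  have hb : cgf' μ (betaInv μ x) = x := Function.invFun_eq hx
  have h := tangent_le (convexOn_cgf μ hI) (fun s => (analyticAt_cgf' μ hI s).differentiableAt)
    (betaInv μ x) s
  have hb' : deriv (cgf μ) (betaInv μ x) = x := hb
  unfold gammaFn
  rw [hb]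
  rw [hb'] at h
  linarith

/-- The lower bound `s x − α(s) ≤ γ(β(x))`, including the values `−log μ({x})` outside `N`. -/
lemma le_gb (μ : Measure ℝ) [IsProbabilityMeasure μ]
    (hI : ∀ s, Integrable (fun x => Real.exp (s * x)) μ) (x s : ℝ) :
    ENNReal.ofReal (s * x - cgf μ s) ≤ gb μ x := by
  unfold gb
  split_ifs with h1 h2
  · exact ENNReal.ofReal_le_ofReal (le_gamma μ hI x s h1)
  · exact le_top
  · apply ENNReal.ofReal_le_ofReal
    have hm : 0 < (μ {x}).toReal := ENNReal.toReal_pos h2 (measure_ne_top _ _)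
    have h3 : (μ {x}).toReal * Real.exp (s * x) ≤ ∫ y, Real.exp (s * y) ∂μ := by
      have h4 := setIntegral_le_integral (s := {x}) (hI s)
        (ae_of_all _ fun y => (Real.exp_pos (s * y)).le)
      simpa [Measure.real] using h4
    have h5 := Real.log_le_log (by positivity) h3
    rw [Real.log_mul hm.ne' (Real.exp_pos _).ne', Real.log_exp] at h5
    unfold cgf
    linarith

lemma vFn_le (μ : Measure ℝ) [IsProbabilityMeasure μ]
    (hI : ∀ s, Integrable (fun x => Real.exp (s * x)) μ) (θ x : ℝ) :
    vFn μ θ 0 x ≤ ((cgf μ (2 * θ * x) - θ * x ^ 2 : ℝ) : EReal) := by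
  have h := le_gb μ hI x (2 * θ * x)
  have h2 : ((2 * θ * x * x - cgf μ (2 * θ * x) : ℝ) : EReal) ≤ ((gb μ x : ℝ≥0∞) : EReal) := by
    refine le_trans ?_ (EReal.coe_ennreal_le_coe_ennreal_iff.mpr h)
    rw [EReal.coe_ennreal_ofReal]
    exact_mod_cast le_max_left _ _
  unfold vFn
  refine (EReal.sub_le_sub le_rfl h2).trans ?_
  rw [← EReal.coe_sub, EReal.coe_le_coe_iff]
  apply le_of_eq
  ring

lemma vFn_eq (μ : Measure ℝ) [IsProbabilityMeasure μ]
    (hI : ∀ s, Integrable (fun x => Real.exp (s * x)) μ) (θ x : ℝ)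
    (hx : cgf' μ (2 * θ * x) = x) :
    vFn μ θ 0 x = ((cgf μ (2 * θ * x) - θ * x ^ 2 : ℝ) : EReal) := by
  refine le_antisymm (vFn_le μ hI θ x) ?_
  have hN : x ∈ Ndom μ := ⟨_, hx⟩
  have h0 : 0 ≤ gammaFn μ (betaInv μ x) := by
    have := le_gamma μ hI x 0 hN
    simpa [cgf] using this
  have hb : cgf' μ (betaInv μ x) = x := Function.invFun_eq hN
  -- the tangent line at `β(x)` has slope `x`, so no injectivity of `α'` is needed here
  have h1 : gammaFn μ (betaInv μ x) ≤ 2 * θ * x * x - cgf μ (2 * θ * x) := by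
    have h := tangent_le (convexOn_cgf μ hI)
      (fun s => (analyticAt_cgf' μ hI s).differentiableAt) (2 * θ * x) (betaInv μ x)
    have hx' : deriv (cgf μ) (2 * θ * x) = x := hx
    unfold gammaFn
    rw [hb]
    rw [hx'] at h
    linarith
  unfold vFn gb
  rw [if_pos hN, EReal.coe_ennreal_ofReal, max_eq_left h0, ← EReal.coe_sub, EReal.coe_le_coe_iff]
  linarith

/-! ### Maximizers of an even function with concave derivative on the half-line -/

/-- An even function `f` whose second derivative is non-increasing in `|x|`, with `f''(0) > c > 0` and
`f(s) ≤ c s²/4 + C`, is such that `f(s) − c s²/2` has exactly two maximizers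
`±s₀`, and `f'(s₀) = c s₀`. -/
lemma exists_unique_max {f : ℝ → ℝ} (hf : Differentiable ℝ f) (hf' : Differentiable ℝ (deriv f))
    (heven : ∀ x, f (-x) = f x) (hzero : deriv f 0 = 0)
    (hmono : ∀ x y : ℝ, |y| ≤ |x| → deriv (deriv f) x ≤ deriv (deriv f) y)
    {c C : ℝ} (hc : 0 < c) (hc0 : c < deriv (deriv f) 0)
    (hgrow : ∀ s, f s ≤ c / 4 * s ^ 2 + C) :
    ∃ s₀, 0 < s₀ ∧ deriv f s₀ = c * s₀ ∧
      ∀ r, r ≠ s₀ → r ≠ -s₀ → f r - c / 2 * r ^ 2 < f s₀ - c / 2 * s₀ ^ 2 := by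
  set G : ℝ → ℝ := fun s => f s - c / 2 * s ^ 2 with hG
  set h : ℝ → ℝ := fun s => deriv f s - c * s with hh
  have hGd : ∀ s, HasDerivAt G (h s) s := fun s => by
    have := (hf s).hasDerivAt.sub (((hasDerivAt_id s).pow 2).const_mul (c / 2))
    refine this.congr_deriv ?_
    simp only [hh, id]
    ring
  have hhd : ∀ s, HasDerivAt h (deriv (deriv f) s - c) s := fun s => by
    have := (hf' s).hasDerivAt.sub ((hasDerivAt_id s).const_mul c)
    refine this.congr_deriv ?_
    ring
  have hhc : Continuous h := continuous_iff_continuousAt.mpr fun s => (hhd s).continuousAt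
  have hGc : Continuous G := continuous_iff_continuousAt.mpr fun s => (hGd s).continuousAt
  have hGdv : deriv G = h := funext fun s => (hGd s).deriv
  have hh0 : h 0 = 0 := by simp [hh, hzero]
  have hconc : ConcaveOn ℝ (Ici 0) h := by
    refine AntitoneOn.concaveOn_of_deriv (convex_Ici 0) hhc.continuousOn
      (fun s _ => (hhd s).differentiableAt.differentiableWithinAt) ?_
    intro x hx y hy hxy
    rw [interior_Ici, mem_Ioi] at hx hy
    rw [(hhd x).deriv, (hhd y).deriv]
    have := hmono y x (by rwa [abs_of_pos hx, abs_of_pos hy])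
    linarith
  -- the strictly positive slope at `0` makes `h` positive at arbitrarily small `e > 0`
  have hsmall : ∀ s, 0 < s → ∃ e, 0 < e ∧ e < s ∧ 0 < h e := by
    intro s hs
    have hsl := hasDerivAt_iff_tendsto_slope.mp (hhd 0)
    have hev : ∀ᶠ y in nhdsWithin (0 : ℝ) (Ioi 0), 0 < slope h 0 y :=
      (hsl.mono_left (nhdsWithin_mono _ fun y hy => ne_of_gt hy)).eventually
        (lt_mem_nhds (by linarith))
    have hev2 : ∀ᶠ y in nhdsWithin (0 : ℝ) (Ioi 0), y ∈ Ioo 0 s := Ioo_mem_nhdsGT hs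
    obtain ⟨y, hy, hy0, hys⟩ := (hev.and hev2).exists
    refine ⟨y, hy0, hys, ?_⟩
    rw [slope_def_field, hh0, sub_zero, sub_zero] at hy
    exact (div_pos_iff_of_pos_right hy0).mp hy
  obtain ⟨e, he0, -, he⟩ := hsmall 1 one_pos
  have hS : ∃ S, e < S ∧ h S ≤ 0 := by
    by_contra! hcon
    have hm : MonotoneOn G (Ici e) := by
      refine monotoneOn_of_deriv_nonneg (convex_Ici e) hGc.continuousOn
        (fun s _ => (hGd s).differentiableAt.differentiableWithinAt) fun s hs => ?_
      rw [interior_Ici, mem_Ioi] at hs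
      rw [hGdv]
      exact (hcon s hs).le
    obtain ⟨s, hs1, hs2⟩ : ∃ s, e ≤ s ∧ C - G e < c / 4 * s ^ 2 := by
      have ht : Tendsto (fun s : ℝ => c / 4 * s ^ 2) atTop atTop :=
        (tendsto_pow_atTop two_ne_zero).const_mul_atTop (by positivity)
      exact ((eventually_ge_atTop e).and (ht.eventually_gt_atTop _)).exists
    have h1 := hm self_mem_Ici hs1 hs1
    have h2 := hgrow s
    have h3 : G s = f s - c / 2 * s ^ 2 := rfl
    linarith
  obtain ⟨S, heS, hS⟩ := hS
  obtain ⟨s₀, ⟨hs1, hs2⟩, hs0⟩ : (0 : ℝ) ∈ h '' Icc e S :=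
    intermediate_value_Icc' heS.le hhc.continuousOn ⟨hS, he.le⟩
  have hpos : 0 < s₀ := he0.trans_le hs1
  have hes : e < s₀ := hs1.lt_of_ne fun hc' => by rw [hc', hs0] at he; exact lt_irrefl _ he
  have hleft : ∀ s, 0 < s → s < s₀ → 0 < h s := by
    intro s hs hss
    obtain ⟨d, hd0, hds, hd⟩ := hsmall s hs
    have h1 := hconc.slope_anti_adjacent (mem_Ici.mpr hd0.le) (mem_Ici.mpr hpos.le) hds hss
    rw [hs0] at h1
    by_contra! hneg
    have h2 : 0 ≤ (0 - h s) / (s₀ - s) := div_nonneg (by linarith) (by linarith)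
    have h3 : (h s - h d) / (s - d) < 0 := div_neg_of_neg_of_pos (by linarith) (by linarith)
    linarith
  have hright : ∀ s, s₀ < s → h s < 0 := by
    intro s hss
    have h1 := hconc.slope_anti_adjacent (mem_Ici.mpr he0.le)
      (mem_Ici.mpr (hpos.trans hss).le) hes hss
    rw [hs0] at h1
    by_contra! hneg
    have h2 : 0 ≤ (h s - 0) / (s - s₀) := div_nonneg (by linarith) (by linarith)
    have h3 : (0 - h e) / (s₀ - e) < 0 := div_neg_of_neg_of_pos (by linarith) (by linarith)
    linarith
  have hGl : StrictMonoOn G (Icc 0 s₀) := by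
    refine strictMonoOn_of_deriv_pos (convex_Icc 0 s₀) hGc.continuousOn fun s hs => ?_
    rw [interior_Icc] at hs
    rw [hGdv]
    exact hleft s hs.1 hs.2
  have hGr : StrictAntiOn G (Ici s₀) := by
    refine strictAntiOn_of_deriv_neg (convex_Ici s₀) hGc.continuousOn fun s hs => ?_
    rw [interior_Ici] at hs
    rw [hGdv]
    exact hright s hs
  have key : ∀ r, 0 ≤ r → r ≠ s₀ → G r < G s₀ := by
    intro r hr hne
    rcases lt_or_gt_of_ne hne with hlt | hgt
    · exact hGl ⟨hr, hlt.le⟩ ⟨hpos.le, le_rfl⟩ hlt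
    · exact hGr self_mem_Ici hgt.le hgt
  refine ⟨s₀, hpos, ?_, fun r h1 h2 => ?_⟩
  · have : deriv f s₀ - c * s₀ = 0 := hs0
    linarith
  · rcases le_total 0 r with hr | hr
    · exact key r hr h1
    · have h3 := key (-r) (by linarith) (fun h => h2 (by linarith))
      simpa [hG, heven] using h3

/-! ### Conclusion -/

/-- in the low-temperature regime `2θ > 1/α''(0)` with `B = 0`, the set
of global maximizers of `𝔳_{θ,0}` on `cl(N)` is exactly `{−t, t}` for some `t > 0`
satisfying `t = α'(2θt)`. -/
theorem statement7
    (μ : Measure ℝ) [IsProbabilityMeasure μ] (hND : Nondeg μ)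
    (hsym : μ.map (fun x : ℝ => -x) = μ)
    (p : ℝ) (hp : 2 ≤ p) (htail : TailCond μ p)
    (hmono : ∀ x y : ℝ, |y| ≤ |x| → deriv (deriv (cgf μ)) x ≤ deriv (deriv (cgf μ)) y)
    (θ : ℝ) (hθ : 0 ≤ θ) (hθ2 : 1 / deriv (deriv (cgf μ)) 0 < 2 * θ) :
    ∃ t : ℝ, 0 < t ∧ t ∈ closure (Ndom μ) ∧ -t ∈ closure (Ndom μ) ∧
      t = cgf' μ (2 * θ * t) ∧
      ∀ x ∈ closure (Ndom μ),
        ((∀ y ∈ closure (Ndom μ), vFn μ θ 0 y ≤ vFn μ θ 0 x) ↔ (x = t ∨ x = -t)) := by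
  have hI := integrable_exp_mul_id μ p hp htail
  have hpos := deriv2_cgf_zero_pos μ hND hI
  have hθ0 : 0 < 2 * θ := (one_div_pos.mpr hpos).trans hθ2
  obtain ⟨C, hC⟩ := cgf_le_quadratic μ p hp htail (2 * θ) hθ0
  have hzero : cgf' μ 0 = 0 := by
    have := cgf'_neg μ hsym 0
    rw [neg_zero] at this
    linarith
  obtain ⟨s₀, hs0, hfix, hmax⟩ := exists_unique_max (f := cgf μ) (c := 1 / (2 * θ)) (C := C)
    (fun s => (analyticAt_cgf' μ hI s).differentiableAt)
    (fun s => (analyticAt_cgf' μ hI s).deriv.differentiableAt)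
    (cgf_neg μ hsym) hzero hmono (by positivity) ((one_div_lt hpos hθ0).mp hθ2)
    (fun s => (hC s).trans (le_of_eq (by field_simp)))
  set t : ℝ := s₀ / (2 * θ) with ht
  have hts : 2 * θ * t = s₀ := by exact mul_div_cancel₀ s₀ hθ0.ne'
  have ht0 : 0 < t := div_pos hs0 hθ0
  have htfix : cgf' μ (2 * θ * t) = t := by
    rw [hts, ht]
    exact hfix.trans (by ring)
  have htfix' : cgf' μ (2 * θ * -t) = -t := by rw [mul_neg, cgf'_neg μ hsym, htfix]
  have hvt := vFn_eq μ hI θ t htfix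
  have hvt' : vFn μ θ 0 (-t) = ((cgf μ (2 * θ * t) - θ * t ^ 2 : ℝ) : EReal) := by
    rw [vFn_eq μ hI θ (-t) htfix', mul_neg, cgf_neg μ hsym, neg_sq]
  have hlt : ∀ x, x ≠ t → x ≠ -t → vFn μ θ 0 x < vFn μ θ 0 t := by
    intro x h1 h2
    rw [hvt]
    refine (vFn_le μ hI θ x).trans_lt (EReal.coe_lt_coe_iff.mpr ?_)
    have h3 := hmax (2 * θ * x)
      (fun h => h1 (mul_left_cancel₀ hθ0.ne' (h.trans hts.symm)))
      (fun h => h2 (mul_left_cancel₀ hθ0.ne' (by rw [h, mul_neg, hts])))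
    rw [← hts] at h3
    have h4 : ∀ y : ℝ, 1 / (2 * θ) / 2 * (2 * θ * y) ^ 2 = θ * y ^ 2 := fun y => by
      have : θ ≠ 0 := fun h => by simp [h] at hθ0
      field_simp
    rwa [h4, h4] at h3
  have hle : ∀ y, vFn μ θ 0 y ≤ vFn μ θ 0 t := by
    intro y
    by_cases h1 : y = t
    · rw [h1]
    by_cases h2 : y = -t
    · rw [h2, hvt', hvt]
    exact (hlt y h1 h2).le
  have htN : t ∈ closure (Ndom μ) := subset_closure ⟨_, htfix⟩
  refine ⟨t, ht0, htN, subset_closure ⟨_, htfix'⟩, htfix.symm, fun x _ => ⟨fun hx => ?_, ?_⟩⟩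
  · by_contra! hcon
    exact absurd (hx t htN) (not_le.mpr (hlt x hcon.1 hcon.2))
  · rintro (rfl | rfl) y _
    · exact hle y
    · rw [hvt', ← hvt]
      exact hle y

end GibbsMulti
end
end

section
/- Let μ be a non-degenerate probability measure on ℝ satisfying E_μ[exp(λ|X|^p)] < ∞ for all λ > 0 with some p > 1. Then α'(θ)/|θ|^{1/(p−1)} → 0 as θ → +∞, and α'(θ)/|θ|^{1/(p−1)} → 0 as θ → −∞. -/
/-!
The function `α` is convex, so it lies above its tangent lines. The tangent at `θ`, read at `2θ`,
gives `θ α'(θ) ≤ α(2θ) - α(θ)`; read at `0`, it gives `θ α'(θ) ≥ α(θ)`; and the tangent at `0` gives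
`α(θ) ≥ θ α'(0)`. Hence `0 ≤ θ (α'(θ) - α'(0)) ≤ α(2θ) - 2θ α'(0)` for `θ` of either sign
(`mul_cgf'_sub_bounds`), and it suffices to show that `α(s) = o(|s|^q)` with `q = p / (p - 1)`, the
exponent conjugate to `p`, because `q = 1 + 1 / (p - 1)`.

That growth bound (`cgf_le_of_tailCond`) comes from Young's inequality
`s x ≤ δ^q |s|^q + δ^{-p} |x|^p`: exponentiating and integrating yields
`α(s) ≤ δ^q |s|^q + log E[exp(δ^{-p} |X|^p)]`, and `δ` is arbitrary.
-/

open MeasureTheory Filter Set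
open scoped ENNReal NNReal

noncomputable section

namespace GibbsMulti

/-- Young's inequality with a free scaling parameter `δ`; the factors `1 / p` and `1 / q` are
dropped. -/
lemma young_scaled {p q : ℝ} (hpq : q.HolderConjugate p) {δ : ℝ} (hδ : 0 < δ) (s x : ℝ) :
    s * x ≤ δ ^ q * |s| ^ q + (δ⁻¹) ^ p * |x| ^ p := by
  have h := Real.young_inequality (δ * s) (δ⁻¹ * x) hpq
  have e : δ * s * (δ⁻¹ * x) = s * x := by field_simp
  rw [e, abs_mul, abs_mul, abs_of_pos hδ, abs_of_pos (inv_pos.2 hδ),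
    Real.mul_rpow hδ.le (abs_nonneg s), Real.mul_rpow (inv_pos.2 hδ).le (abs_nonneg x)] at h
  have h1 : δ ^ q * |s| ^ q / q ≤ δ ^ q * |s| ^ q := div_le_self (by positivity) hpq.lt.le
  have h2 : (δ⁻¹) ^ p * |x| ^ p / p ≤ (δ⁻¹) ^ p * |x| ^ p :=
    div_le_self (by positivity) hpq.symm.lt.le
  linarith

lemma exp_le_young {p q : ℝ} (hpq : q.HolderConjugate p) {δ : ℝ} (hδ : 0 < δ) (s x : ℝ) :
    Real.exp (s * x) ≤ Real.exp (δ ^ q * |s| ^ q) * Real.exp ((δ⁻¹) ^ p * |x| ^ p) := by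
  rw [← Real.exp_add]
  exact Real.exp_le_exp.2 (young_scaled hpq hδ s x)

lemma integrable_exp_of_tailCond {μ : Measure ℝ} {p q : ℝ} (hpq : q.HolderConjugate p)
    (htail : TailCond μ p) (s : ℝ) : Integrable (fun x => Real.exp (s * x)) μ := by
  refine ((htail _ (Real.rpow_pos_of_pos (inv_pos.2 one_pos) p)).const_mul
    (Real.exp (1 ^ q * |s| ^ q))).mono' (by fun_prop) (ae_of_all _ fun x => ?_)
  rw [Real.norm_of_nonneg (Real.exp_pos _).le]
  exact exp_le_young hpq one_pos s x

/-- The log moment generating function is `o(|s|^q)`, in quantitative form. -/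
lemma cgf_le_of_tailCond {μ : Measure ℝ} [IsProbabilityMeasure μ] {p q : ℝ}
    (hpq : q.HolderConjugate p) (htail : TailCond μ p) {ε : ℝ} (hε : 0 < ε) :
    ∃ C : ℝ, ∀ s, cgf μ s ≤ ε * |s| ^ q + C := by
  -- `δ` is chosen so that `δ ^ q = ε`.
  have hδ : 0 < ε ^ q⁻¹ := Real.rpow_pos_of_pos hε _
  have hδq : (ε ^ q⁻¹) ^ q = ε := Real.rpow_inv_rpow hε.le hpq.ne_zero
  have hI := htail _ (Real.rpow_pos_of_pos (inv_pos.2 hδ) p)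
  refine ⟨Real.log (∫ x, Real.exp (((ε ^ q⁻¹)⁻¹) ^ p * |x| ^ p) ∂μ), fun s => ?_⟩
  have hs := integrable_exp_of_tailCond hpq htail s
  have hle : ∫ x, Real.exp (s * x) ∂μ ≤
      Real.exp (ε * |s| ^ q) * ∫ x, Real.exp (((ε ^ q⁻¹)⁻¹) ^ p * |x| ^ p) ∂μ := by
    rw [← integral_const_mul]
    refine integral_mono hs (hI.const_mul _) fun x => ?_
    have h := exp_le_young hpq hδ s x
    rwa [hδq] at h
  have h := Real.log_le_log (integral_exp_pos hs) hle
  rwa [Real.log_mul (Real.exp_pos _).ne' (integral_exp_pos hI).ne', Real.log_exp] at h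

/-- Convexity of the log moment generating function: it lies above its tangent lines. -/
lemma cgf_tangent {μ : Measure ℝ} [IsProbabilityMeasure μ]
    (hI : ∀ s : ℝ, Integrable (fun x => Real.exp (s * x)) μ) (t s : ℝ) :
    cgf μ t + (s - t) * cgf' μ t ≤ cgf μ s := by
  have hmem : t ∈ interior (ProbabilityTheory.integrableExpSet (id : ℝ → ℝ) μ) := by
    have : ProbabilityTheory.integrableExpSet (id : ℝ → ℝ) μ = univ := eq_univ_of_forall hI
    simp [this]
  have hX : Integrable (fun x => x * Real.exp (t * x)) μ := by
    simpa using ProbabilityTheory.integrable_pow_mul_exp_of_mem_interior_integrableExpSet hmem 1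
  have hM : 0 < ∫ x, Real.exp (t * x) ∂μ := integral_exp_pos (hI t)
  have hd : cgf' μ t = (∫ x, x * Real.exp (t * x) ∂μ) / ∫ x, Real.exp (t * x) ∂μ :=
    ProbabilityTheory.deriv_cgf hmem
  set m := cgf' μ t
  have hd' : ∫ x, x * Real.exp (t * x) ∂μ = m * ∫ x, Real.exp (t * x) ∂μ := by
    rw [hd, div_mul_cancel₀ _ (ne_of_gt hM)]
  -- `exp y ≥ 1 + y` at `y = (s - t) (x - m)`; the linear term integrates to `0` against `e^{tx}`.
  have hle : Real.exp ((s - t) * m) * ∫ x, Real.exp (t * x) ∂μ ≤ ∫ x, Real.exp (s * x) ∂μ := by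
    have e : ∫ x, ((1 - (s - t) * m) * Real.exp (t * x) + (s - t) * (x * Real.exp (t * x))) ∂μ
        = ∫ x, Real.exp (t * x) ∂μ := by
      rw [integral_add ((hI t).const_mul _) (hX.const_mul _), integral_const_mul,
        integral_const_mul, hd']
      ring
    rw [← e, ← integral_const_mul]
    refine integral_mono ((((hI t).const_mul _).add (hX.const_mul _)).const_mul _) (hI s)
      fun x => ?_
    have h1 := Real.add_one_le_exp ((s - t) * (x - m))
    have h2 : Real.exp (s * x) =
        Real.exp ((s - t) * m) * (Real.exp ((s - t) * (x - m)) * Real.exp (t * x)) := by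
      rw [← Real.exp_add, ← Real.exp_add]; ring_nf
    change Real.exp ((s - t) * m) *
      ((1 - (s - t) * m) * Real.exp (t * x) + (s - t) * (x * Real.exp (t * x))) ≤ Real.exp (s * x)
    rw [h2]
    refine mul_le_mul_of_nonneg_left ?_ (Real.exp_pos _).le
    have h3 := mul_le_mul_of_nonneg_right h1 (Real.exp_pos (t * x)).le
    linarith
  have h := Real.log_le_log (by positivity) hle
  rw [Real.log_mul (Real.exp_pos _).ne' hM.ne', Real.log_exp] at h
  change Real.log _ + _ ≤ Real.log _
  linarith

lemma mul_cgf'_sub_bounds {μ : Measure ℝ} [IsProbabilityMeasure μ]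
    (hI : ∀ s : ℝ, Integrable (fun x => Real.exp (s * x)) μ) (t : ℝ) :
    0 ≤ t * (cgf' μ t - cgf' μ 0) ∧
      t * (cgf' μ t - cgf' μ 0) ≤ cgf μ (2 * t) - 2 * t * cgf' μ 0 := by
  have h0 : cgf μ 0 = 0 := by simp [cgf]
  have h1 := cgf_tangent hI t 0
  have h2 := cgf_tangent hI t (2 * t)
  have h3 := cgf_tangent hI 0 t
  rw [h0] at h1 h3
  constructor <;> linarith

/-- The limit along any filter on which `|θ| → ∞`, which covers both `+∞` and `-∞`. -/
lemma tendsto_cgf'_div {μ : Measure ℝ} [IsProbabilityMeasure μ] {p : ℝ} (hp : 1 < p)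
    (htail : TailCond μ p) {l : Filter ℝ} (hl : Tendsto (fun θ : ℝ => |θ|) l atTop) :
    Tendsto (fun θ : ℝ => cgf' μ θ / |θ| ^ (1 / (p - 1))) l (nhds 0) := by
  have hp1 : 0 < p - 1 := sub_pos.2 hp
  set a := 1 / (p - 1) with ha
  have ha0 : 0 < a := by positivity
  have hpq : (a + 1).HolderConjugate p := by
    rw [Real.holderConjugate_iff]
    refine ⟨by linarith, ?_⟩
    rw [ha]; field_simp; ring
  have hI := integrable_exp_of_tailCond hpq htail
  rw [Metric.tendsto_nhds]
  intro η hη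
  obtain ⟨C, hC⟩ := cgf_le_of_tailCond hpq htail
    (show 0 < η / 2 / 2 ^ (a + 1) by positivity)
  have hlim : Tendsto (fun θ : ℝ =>
      η / 2 + C * |θ| ^ (-(a + 1)) + 3 * |cgf' μ 0| * |θ| ^ (-a)) l (nhds (η / 2)) := by
    have h1 := ((tendsto_rpow_neg_atTop (show 0 < a + 1 by linarith)).comp hl).const_mul C
    have h2 := ((tendsto_rpow_neg_atTop ha0).comp hl).const_mul (3 * |cgf' μ 0|)
    simpa using (h1.const_add (η / 2)).add h2
  filter_upwards [hlim.eventually_lt_const (half_lt_self hη), hl.eventually_gt_atTop 0]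
    with θ hθ hpos
  rw [Real.dist_eq, sub_zero, abs_div, abs_of_pos (Real.rpow_pos_of_pos hpos a)]
  refine lt_of_le_of_lt ?_ hθ
  obtain ⟨hb0, hb1⟩ := mul_cgf'_sub_bounds hI θ
  have hb2 := hC (2 * θ)
  rw [abs_mul, abs_two, Real.mul_rpow two_pos.le hpos.le, ← mul_assoc,
    div_mul_cancel₀ _ (by positivity)] at hb2
  have hr : |θ| ^ (a + 1) = |θ| ^ a * |θ| := Real.rpow_add_one hpos.ne' a
  have hA : 0 < |θ| ^ a := Real.rpow_pos_of_pos hpos a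
  have hk : |θ| * |cgf' μ θ - cgf' μ 0| ≤
      η / 2 * (|θ| ^ a * |θ|) + C + 2 * |θ| * |cgf' μ 0| := by
    rw [← abs_mul, abs_of_nonneg hb0, ← hr]
    have h4 : -(θ * cgf' μ 0) ≤ |θ| * |cgf' μ 0| := by
      rw [← abs_mul]; exact neg_le_abs _
    linarith
  have htri : |cgf' μ θ| ≤ |cgf' μ θ - cgf' μ 0| + |cgf' μ 0| := by
    simpa using abs_add_le (cgf' μ θ - cgf' μ 0) (cgf' μ 0)
  have hfin : |θ| * |cgf' μ θ| ≤
      η / 2 * (|θ| ^ a * |θ|) + C + 3 * |θ| * |cgf' μ 0| := by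
    have := mul_le_mul_of_nonneg_left htri hpos.le
    linarith
  rw [Real.rpow_neg hpos.le, Real.rpow_neg hpos.le, hr, div_le_iff₀ hA]
  refine le_of_mul_le_mul_left (hfin.trans_eq ?_) hpos
  field_simp

/-- under the tail condition with exponent `p > 1`,
`α'(θ)/|θ|^{1/(p−1)} → 0` as `θ → ±∞`. -/
theorem statement9
    (μ : Measure ℝ) [IsProbabilityMeasure μ] (hND : Nondeg μ)
    (p : ℝ) (hp : 1 < p) (htail : TailCond μ p) :
    Filter.Tendsto (fun θ : ℝ => cgf' μ θ / |θ| ^ (1 / (p - 1)))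
      Filter.atTop (nhds 0) ∧
    Filter.Tendsto (fun θ : ℝ => cgf' μ θ / |θ| ^ (1 / (p - 1)))
      Filter.atBot (nhds 0) :=
  ⟨tendsto_cgf'_div hp htail tendsto_abs_atTop_atTop,
    tendsto_cgf'_div hp htail tendsto_abs_atBot_atTop⟩

end GibbsMulti
end
end

section
/- Let μ be a non-degenerate probability measure on ℝ satisfying E_μ[exp(λ|X|^p)] < ∞ for all λ > 0 with some p > 1. Then β(x)/|x|^{p−1} → +∞ as x increases to sup N within N, and β(x)/|x|^{p−1} → −∞ as x decreases to inf N within N (these limits covering both the cases where the respective endpoint of N is finite and where it is infinite). -/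
/-!
Write `α` for the log moment generating function. Its second derivative at `θ` is the variance of
the tilted measure `e^{θx} μ / ∫ e^{θx} dμ`, which is positive because `μ` is not a Dirac mass; so
`α'` is strictly increasing and `α` lies above its tangents.

*Finite upper endpoint.* No value of `α'` attains `sup N`, so `β(x) → +∞` by monotonicity, while
`|x|^{p-1}` stays bounded (and is nonzero near the endpoint, even when `sup N = 0`).

*Infinite upper endpoint* (`le_of_cgf'_large`). Fix `M > 0` and suppose `x = α'(θ)` is large but
`θ < M x^{p-1}`. With `s = 2 M x^{p-1}`, the tangents at `θ` and at `0` give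
`α(s) ≥ α(θ) + (s - θ) x ≥ M x^p - |α'(0)| M x^{p-1}`. On the other hand
`s y ≤ M x^p / 2 + 2 M 4^{p-1} |y|^p` for every `y` (distinguish `y ≤ x / 4` and `y > x / 4`), so the
tail condition gives `α(s) ≤ M x^p / 2 + K` with `K` depending on `M` only. For large `x` the two
bounds are incompatible.

The claims at the lower endpoint follow by applying those at the upper endpoint to the image of `μ`
under `x ↦ -x`.
-/

open MeasureTheory Filter Set
open scoped ENNReal NNReal

noncomputable section

namespace GibbsMulti

/-- Splitting on `y ≤ x / 4`: the linear function `y ↦ 2 M x^{p-1} y` is dominated by a constant of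
half the size `M x^p` plus a multiple of `|y|^p` that does not depend on `x`. -/
lemma mul_le_split {p M x : ℝ} (hp : 1 < p) (hM : 0 ≤ M) (hx : 0 < x) (y : ℝ) :
    2 * M * x ^ (p - 1) * y ≤ M * x ^ (p - 1) * x / 2 + 2 * M * 4 ^ (p - 1) * |y| ^ p := by
  have hxp : 0 < x ^ (p - 1) := Real.rpow_pos_of_pos hx _
  have h4 : (0 : ℝ) < 4 ^ (p - 1) := Real.rpow_pos_of_pos (by norm_num) _
  have hyp : 0 ≤ |y| ^ p := Real.rpow_nonneg (abs_nonneg y) _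
  rcases le_or_gt y (x / 4) with h | h
  · have h1 : M * x ^ (p - 1) * y ≤ M * x ^ (p - 1) * (x / 4) := by gcongr
    have h2 : 0 ≤ 2 * M * 4 ^ (p - 1) * |y| ^ p := by positivity
    linarith
  · have hy : 0 < y := by linarith
    have h1 : x ^ (p - 1) ≤ 4 ^ (p - 1) * y ^ (p - 1) := by
      rw [← Real.mul_rpow (by norm_num) hy.le]
      exact Real.rpow_le_rpow hx.le (by linarith) (by linarith)
    have h2 : |y| ^ p = y ^ (p - 1) * y := by
      rw [abs_of_pos hy, Real.rpow_sub_one hy.ne', div_mul_cancel₀ _ hy.ne']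
    have h3 : 2 * M * x ^ (p - 1) * y ≤ 2 * M * (4 ^ (p - 1) * y ^ (p - 1)) * y := by gcongr
    have h4 : 0 ≤ M * x ^ (p - 1) * x / 2 := by positivity
    rw [h2]
    linarith

section UpperEndpoint

variable {μ : Measure ℝ} {p : ℝ}

lemma cgf'_betaInv {x : ℝ} (hx : x ∈ Ndom μ) : cgf' μ (betaInv μ x) = x :=
  Function.invFun_eq hx

lemma integrable_exp_mul (hp : 1 < p) (htail : TailCond μ p) (θ : ℝ) :
    Integrable (fun x => Real.exp (θ * x)) μ := by
  refine ((htail (|θ| + 1) (by positivity)).const_mul (Real.exp |θ|)).mono'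
    (by fun_prop) (ae_of_all _ fun x => ?_)
  rw [Real.norm_eq_abs, Real.abs_exp, ← Real.exp_add, Real.exp_le_exp]
  have h1 : θ * x ≤ |θ| * |x| := by rw [← abs_mul]; exact le_abs_self _
  have h2 : |x| ≤ 1 + |x| ^ p := by
    rcases le_total |x| 1 with h | h
    · have := Real.rpow_nonneg (abs_nonneg x) p
      linarith
    · have := Real.rpow_le_rpow_of_exponent_le h hp.le
      rw [Real.rpow_one] at this
      linarith
  have h3 := mul_le_mul_of_nonneg_left h2 (abs_nonneg θ)
  have h4 := Real.rpow_nonneg (abs_nonneg x) p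
  linarith

lemma mem_interior_expSet (hp : 1 < p) (htail : TailCond μ p) (θ : ℝ) :
    θ ∈ interior (ProbabilityTheory.integrableExpSet id μ) := by
  have h : ProbabilityTheory.integrableExpSet id μ = univ :=
    eq_univ_of_forall fun t => integrable_exp_mul hp htail t
  simp [h]

lemma differentiable_cgf (hp : 1 < p) (htail : TailCond μ p) : Differentiable ℝ (cgf μ) :=
  fun θ => (ProbabilityTheory.analyticAt_cgf (mem_interior_expSet hp htail θ)).differentiableAt

/-- `α''(θ)` is the variance of the tilted measure, which vanishes only for Dirac masses. -/
lemma strictMono_cgf' [IsProbabilityMeasure μ] (hND : Nondeg μ) (hp : 1 < p) (htail : TailCond μ p) :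
    StrictMono (cgf' μ) := by
  refine strictMono_of_deriv_pos fun θ => ?_
  have hθ := mem_interior_expSet hp htail θ
  have hint := integrable_exp_mul hp htail θ
  have hvar := ProbabilityTheory.variance_tilted_mul hθ
  have hd : deriv (cgf' μ) θ = iteratedDeriv 2 (ProbabilityTheory.cgf id μ) θ := by
    rw [iteratedDeriv_succ, iteratedDeriv_one]; rfl
  rw [hd, ← hvar]
  refine lt_of_le_of_ne (ProbabilityTheory.variance_nonneg _ _) fun h0 => ?_
  have : IsProbabilityMeasure (μ.tilted (θ * id ·)) := isProbabilityMeasure_tilted hint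
  have hae := ProbabilityTheory.ae_eq_integral_of_variance_eq_zero
    (ProbabilityTheory.memLp_tilted_mul hθ 2) h0.symm
  have hae' := (absolutelyContinuous_tilted hint).ae_le hae
  refine hND (∫ x, id x ∂(μ.tilted (θ * id ·))) ?_
  have hmap := Measure.map_congr (mβ := Real.measurableSpace) hae'
  rw [Measure.map_id] at hmap
  rwa [Measure.map_const, measure_univ, one_smul] at hmap

variable [IsProbabilityMeasure μ]

/-- `α` lies above its tangents (to the right of the point of tangency). -/
lemma tangent_le_s10 (hND : Nondeg μ) (hp : 1 < p) (htail : TailCond μ p) {θ s : ℝ} (h : θ ≤ s) :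
    cgf μ θ + (s - θ) * cgf' μ θ ≤ cgf μ s := by
  have hd := differentiable_cgf hp htail
  have := (convex_Icc θ s).mul_sub_le_image_sub_of_le_deriv hd.continuous.continuousOn
    hd.differentiableOn (C := cgf' μ θ) (fun y hy => by
      rw [interior_Icc] at hy
      exact (strictMono_cgf' hND hp htail).monotone hy.1.le)
    θ (left_mem_Icc.2 h) s (right_mem_Icc.2 h) h
  linarith

lemma lt_betaInv (hND : Nondeg μ) (hp : 1 < p) (htail : TailCond μ p) {x θ : ℝ}
    (hx : x ∈ Ndom μ) (h : cgf' μ θ < x) : θ < betaInv μ x := by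
  rw [← cgf'_betaInv hx] at h
  exact (strictMono_cgf' hND hp htail).lt_iff_lt.1 h

/-- Upper bound for `α` at `2 M x^{p-1}`; the additive constant depends on `M` but not on `x`. -/
lemma cgf_le (hp : 1 < p) (htail : TailCond μ p) {M : ℝ} (hM : 0 < M) :
    ∃ K : ℝ, ∀ x : ℝ, 0 < x →
      cgf μ (2 * M * x ^ (p - 1)) ≤ M * x ^ (p - 1) * x / 2 + K := by
  have hl : (0 : ℝ) < 2 * M * 4 ^ (p - 1) := by positivity
  have hint := htail _ hl
  refine ⟨Real.log (∫ y, Real.exp (2 * M * 4 ^ (p - 1) * |y| ^ p) ∂μ), fun x hx => ?_⟩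
  have hI := integrable_exp_mul hp htail (2 * M * x ^ (p - 1))
  have hle : ∫ y, Real.exp (2 * M * x ^ (p - 1) * y) ∂μ ≤
      Real.exp (M * x ^ (p - 1) * x / 2) *
        ∫ y, Real.exp (2 * M * 4 ^ (p - 1) * |y| ^ p) ∂μ := by
    rw [← integral_const_mul]
    refine integral_mono hI (hint.const_mul _) fun y => ?_
    simp only
    rw [← Real.exp_add, Real.exp_le_exp]
    exact mul_le_split hp hM.le hx y
  have h := Real.log_le_log (integral_exp_pos hI) hle
  rwa [Real.log_mul (Real.exp_ne_zero _) (integral_exp_pos hint).ne', Real.log_exp] at h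

/-- If `α'(θ)` is large then `θ ≥ M α'(θ)^{p-1}`: the tangent lower bound for `α` at
`2 M α'(θ)^{p-1}` would otherwise exceed the upper bound of `cgf_le`. -/
lemma le_of_cgf'_large (hND : Nondeg μ) (hp : 1 < p) (htail : TailCond μ p) {M : ℝ}
    (hM : 0 < M) : ∃ R : ℝ, 0 < R ∧ ∀ θ : ℝ, R ≤ cgf' μ θ → M * cgf' μ θ ^ (p - 1) ≤ θ := by
  obtain ⟨K, hK⟩ := cgf_le hp htail hM
  set m := |cgf' μ 0| with hm
  have hm0 : 0 ≤ m := abs_nonneg _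
  have hKM : 0 ≤ |K| / M := by positivity
  refine ⟨2 * m + 2 + 2 * (|K| / M), by positivity, fun θ hθ => ?_⟩
  set x := cgf' μ θ with hx
  by_contra! hlt
  have hx1 : 1 ≤ x := by linarith
  have hx0 : 0 < x := by linarith
  have hθ0 : 0 < θ := by
    have : cgf' μ 0 < cgf' μ θ := by
      have := le_abs_self (cgf' μ 0)
      linarith
    exact (strictMono_cgf' hND hp htail).lt_iff_lt.1 this
  have hz : 1 ≤ x ^ (p - 1) := Real.one_le_rpow hx1 (by linarith)
  have hup := hK x hx0
  set z := x ^ (p - 1) with hzdef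
  have hMz : 0 < M * z := by positivity
  have ht1 := tangent_le_s10 hND hp htail (θ := θ) (s := 2 * M * z) (by linarith)
  have ht0 := tangent_le_s10 hND hp htail (θ := 0) (s := θ) hθ0.le
  have hc0 : cgf μ 0 = 0 := by simp [cgf]
  rw [hc0] at ht0
  rw [← hx] at ht1
  have h1 : -(m * (M * z)) ≤ θ * cgf' μ 0 := by
    have a1 : θ * -m ≤ θ * cgf' μ 0 := by gcongr; exact neg_abs_le _
    have a2 : m * θ ≤ m * (M * z) := by gcongr
    linarith
  have h2 : M * z * x ≤ (2 * M * z - θ) * x := by gcongr; linarith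
  have h3 : M * z * (x / 2 - m) ≤ K := by linarith
  have h4 : M * (1 + |K| / M) ≤ M * z * (x / 2 - m) := by
    have a : 1 + |K| / M ≤ x / 2 - m := by linarith
    have b : M ≤ M * z := by nlinarith
    gcongr
  have h5 : M * (1 + |K| / M) = M + |K| := by field_simp
  have := le_abs_self K
  linarith

lemma tendsto_sSup (hND : Nondeg μ) (hp : 1 < p) (htail : TailCond μ p)
    (hb : BddAbove (Ndom μ)) :
    Tendsto (fun x : ℝ => betaInv μ x / |x| ^ (p - 1))
      (nhdsWithin (sSup (Ndom μ)) (Ndom μ)) atTop := by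
  have hmono := strictMono_cgf' hND hp htail
  have hlt : ∀ θ, cgf' μ θ < sSup (Ndom μ) := fun θ =>
    (hmono (lt_add_one θ)).trans_le (le_csSup hb ⟨θ + 1, rfl⟩)
  set S := sSup (Ndom μ) with hS
  set B := (|S| + 1) ^ (p - 1) with hB
  have hB0 : 0 < B := by positivity
  -- A nonzero `x` near `S` is needed since `β(x) / |x|^{p-1}` has the junk value `0` at `x = 0`.
  have hne : ∀ᶠ x in nhdsWithin S (Ndom μ), x ≠ 0 := by
    by_cases h0 : S = 0
    · filter_upwards [self_mem_nhdsWithin] with x hx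
      obtain ⟨θ, rfl⟩ := hx
      exact (h0 ▸ hlt θ).ne
    · exact nhdsWithin_le_nhds (eventually_ne_nhds h0)
  have habs : ∀ᶠ x in nhdsWithin S (Ndom μ), |x| < |S| + 1 :=
    nhdsWithin_le_nhds (continuous_abs.continuousAt.eventually_lt_const (lt_add_one _))
  refine tendsto_atTop.2 fun M => ?_
  have hgt : ∀ᶠ x in nhdsWithin S (Ndom μ), cgf' μ (max M 1 * B) < x :=
    nhdsWithin_le_nhds (lt_mem_nhds (hlt _))
  filter_upwards [hne, habs, hgt, self_mem_nhdsWithin] with x h0 h1 h2 hx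
  have hx0 : 0 < |x| := abs_pos.2 h0
  have hb1 : max M 1 * B < betaInv μ x := lt_betaInv hND hp htail hx h2
  rw [le_div_iff₀ (Real.rpow_pos_of_pos hx0 _)]
  calc M * |x| ^ (p - 1) ≤ max M 1 * B := by
        have : |x| ^ (p - 1) ≤ B := Real.rpow_le_rpow hx0.le h1.le (by linarith)
        gcongr
        exact le_max_left _ _
    _ ≤ betaInv μ x := hb1.le

lemma tendsto_top (hND : Nondeg μ) (hp : 1 < p) (htail : TailCond μ p) :
    Tendsto (fun x : ℝ => betaInv μ x / |x| ^ (p - 1)) (atTop ⊓ 𝓟 (Ndom μ)) atTop := by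
  refine tendsto_atTop.2 fun M => ?_
  obtain ⟨R, hR0, hR⟩ := le_of_cgf'_large hND hp htail (M := max M 1) (by positivity)
  rw [eventually_inf_principal]
  filter_upwards [eventually_ge_atTop R] with x hx hxN
  have hx0 : 0 < x := hR0.trans_le hx
  have h := hR (betaInv μ x)
  rw [cgf'_betaInv hxN] at h
  have hz : 0 < x ^ (p - 1) := Real.rpow_pos_of_pos hx0 _
  rw [abs_of_pos hx0, le_div_iff₀ hz]
  refine le_trans ?_ (h hx)
  gcongr
  exact le_max_left _ _

end UpperEndpoint

section Reflection

variable {μ : Measure ℝ}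

lemma cgf'_map_neg (θ : ℝ) : cgf' (μ.map Neg.neg) θ = -cgf' μ (-θ) := by
  have h : cgf (μ.map Neg.neg) = fun θ => cgf μ (-θ) := by
    funext t
    simp only [cgf]
    rw [integral_map (by fun_prop) (by fun_prop)]
    simp
  simp only [cgf', h, deriv_comp_neg]

lemma Ndom_map_neg : Ndom (μ.map Neg.neg) = -Ndom μ := by
  ext x
  simp only [Ndom, mem_range, cgf'_map_neg, Set.mem_neg]
  constructor
  · rintro ⟨θ, rfl⟩
    exact ⟨-θ, by simp⟩
  · rintro ⟨θ, h⟩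
    exact ⟨-θ, by simp [h]⟩

lemma nondeg_map_neg (hND : Nondeg μ) : Nondeg (μ.map Neg.neg) := by
  intro c hc
  refine hND (-c) ?_
  have h := congrArg (Measure.map Neg.neg) hc
  rwa [Measure.map_map measurable_neg measurable_neg, neg_comp_neg, Measure.map_id,
    Measure.map_dirac' measurable_neg] at h

lemma tailCond_map_neg {p : ℝ} (h : TailCond μ p) : TailCond (μ.map Neg.neg) p := by
  intro l hl
  have hm : Measurable fun x : ℝ => Real.exp (l * |x| ^ p) := by measurability
  rw [integrable_map_measure hm.aestronglyMeasurable (by fun_prop)]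
  simpa [Function.comp_def] using h l hl

/-- Uses injectivity of `α'`: `invFun` commutes with the reflection only on the range of `α'`. -/
lemma betaInv_map_neg {x : ℝ} (hinj : Function.Injective (cgf' μ)) (hx : x ∈ Ndom μ) :
    betaInv (μ.map Neg.neg) (-x) = -betaInv μ x := by
  have hx' : -x ∈ Ndom (μ.map Neg.neg) := by simpa [Ndom_map_neg] using hx
  have h : cgf' (μ.map Neg.neg) (betaInv (μ.map Neg.neg) (-x)) = -x := cgf'_betaInv hx'
  have h' := cgf'_betaInv hx
  rw [cgf'_map_neg, neg_inj] at h
  rw [← hinj (h.trans h'.symm), neg_neg]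

/-- Transfers a limit `+∞` for the reflected measure to a limit `-∞` for `μ`. -/
lemma tendsto_of_map_neg {l l' : Filter ℝ} {q : ℝ} (hinj : Function.Injective (cgf' μ))
    (hl : Tendsto Neg.neg l l') (hN : ∀ᶠ x in l, x ∈ Ndom μ)
    (h : Tendsto (fun x : ℝ => betaInv (μ.map Neg.neg) x / |x| ^ q) l' atTop) :
    Tendsto (fun x : ℝ => betaInv μ x / |x| ^ q) l atBot := by
  refine (tendsto_neg_atTop_atBot.comp (h.comp hl)).congr' ?_
  filter_upwards [hN] with x hx
  simp [betaInv_map_neg hinj hx, neg_div]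

end Reflection


/-- `β(x)/|x|^{p−1} → +∞` as `x` increases to `sup N` within `N`, and
`β(x)/|x|^{p−1} → −∞` as `x` decreases to `inf N` within `N`, covering both the cases of
a finite and of an infinite endpoint. -/
theorem statement10
    (μ : Measure ℝ) [IsProbabilityMeasure μ] (hND : Nondeg μ)
    (p : ℝ) (hp : 1 < p) (htail : TailCond μ p) :
    (BddAbove (Ndom μ) →
      Filter.Tendsto (fun x : ℝ => betaInv μ x / |x| ^ (p - 1))
        (nhdsWithin (sSup (Ndom μ)) (Ndom μ)) Filter.atTop) ∧
    (¬ BddAbove (Ndom μ) →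
      Filter.Tendsto (fun x : ℝ => betaInv μ x / |x| ^ (p - 1))
        (Filter.atTop ⊓ Filter.principal (Ndom μ)) Filter.atTop) ∧
    (BddBelow (Ndom μ) →
      Filter.Tendsto (fun x : ℝ => betaInv μ x / |x| ^ (p - 1))
        (nhdsWithin (sInf (Ndom μ)) (Ndom μ)) Filter.atBot) ∧
    (¬ BddBelow (Ndom μ) →
      Filter.Tendsto (fun x : ℝ => betaInv μ x / |x| ^ (p - 1))
        (Filter.atBot ⊓ Filter.principal (Ndom μ)) Filter.atBot) := by
  have hinj := (strictMono_cgf' hND hp htail).injective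
  have hprob : IsProbabilityMeasure (μ.map Neg.neg) :=
    Measure.isProbabilityMeasure_map measurable_neg.aemeasurable
  have hND' := nondeg_map_neg hND
  have htail' := tailCond_map_neg htail
  have hmaps : MapsTo Neg.neg (Ndom μ) (Ndom (μ.map Neg.neg)) := by
    intro x hx
    simpa [Ndom_map_neg] using hx
  refine ⟨tendsto_sSup hND hp htail, fun _ => tendsto_top hND hp htail, fun hb => ?_, fun _ => ?_⟩
  · refine tendsto_of_map_neg hinj ?_ self_mem_nhdsWithin
      (tendsto_sSup hND' hp htail' (by rw [Ndom_map_neg]; exact hb.neg))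
    have hS : sSup (Ndom (μ.map Neg.neg)) = -sInf (Ndom μ) := by
      have hne : (Ndom μ).Nonempty := range_nonempty _
      rw [Ndom_map_neg, csSup_neg hne hb]
    rw [hS]
    exact continuous_neg.continuousWithinAt.tendsto_nhdsWithin hmaps
  · exact tendsto_of_map_neg hinj
      (tendsto_neg_atBot_atTop.inf (tendsto_principal_principal.2 hmaps))
      (mem_inf_of_right (mem_principal_self _)) (tendsto_top hND' hp htail')

end GibbsMulti
end
end

section
/- Fix v ≥ 2, p ≥ 1 and q > 1 with 1/p + 1/q ≤ 1, a finite simple graph H on vertex set [v] with edge set E(H) and maximum degree Δ, and a symmetric measurable W : [0,1]² → ℝ. Let ν be a probability measure on [0,1] × ℝ whose first marginal is Unif[0,1], and let (U₁,V₁),…,(U_v,V_v) be i.i.d. with law ν. Then for any measurable φ : ℝ^v → ℝ, E[ (∏_{(a,b)∈E(H)} |W(U_a,U_b)|) · |φ(V₁,…,V_v)| ] ≤ ‖W‖_{L^{qΔ}([0,1]²)}^{|E(H)|} · ( E|φ(V₁,…,V_v)|^p )^{1/p}. -/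
/-!
Write `F(U) = ∏_{(a,b) ∈ E} |W(U_a, U_b)|`. Since `1/p + 1/q ≤ 1` and the law of `(U, V)` is a
probability measure, Hölder's inequality gives
`E[F(U) |φ(V)|] ≤ (E F(U)^q)^{1/q} (E |φ(V)|^p)^{1/p}`.

It remains to bound `E F(U)^q`. This is Finner's generalization of Hölder's inequality
(`lintegral_prod_rpow_le_of_dependsOn`): if every coordinate occurs in factors whose weights `c e`
add up to at most `1`, then `E ∏ f_e^{c e} ≤ ∏ (E f_e)^{c e}`. It is proved by integrating out the
coordinates one at a time, using the ordinary Hölder inequality for the factors that contain the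
current coordinate; the other factors are constant in it. Each vertex lies in at most `Δ` edges, so
Finner's inequality applies to `f_e = |W(U_a, U_b)|^{qΔ}` with all weights `1/Δ`. The endpoints of
an edge are distinct, hence `(U_a, U_b)` is uniform on the unit square and `E f_e = ‖W‖_{qΔ}^{qΔ}`.
-/


open MeasureTheory Filter Set
open scoped ENNReal NNReal

noncomputable section

namespace GibbsMulti

/-- The uniform probability measure on the cube `[0,1]^v`. -/
def unifCube (v : ℕ) : Measure (Fin v → ℝ) :=
  Measure.pi fun _ => volume.restrict (Icc (0:ℝ) 1)

/-- The uniform probability measure on `[0,1]²`. -/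
def unifSq : Measure (ℝ × ℝ) :=
  (volume.restrict (Icc (0:ℝ) 1)).prod (volume.restrict (Icc (0:ℝ) 1))

variable {v : ℕ}

/-- The maximum degree of the graph on `[v]` with edge set `E`. -/
def maxDeg (E : Finset (Fin v × Fin v)) : ℕ :=
  Finset.univ.sup fun a => (E.filter fun e => e.1 = a ∨ e.2 = a).card

/-- `∏_{(a,b) ∈ E(H)} W(x_a, x_b)`. -/
def edgeProd (E : Finset (Fin v × Fin v)) (W : ℝ → ℝ → ℝ) (x : Fin v → ℝ) : ℝ :=
  ∏ e ∈ E, W (x e.1) (x e.2)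

/-- `Sym[W](x₁,…,x_v)`. -/
def symW (E : Finset (Fin v × Fin v)) (W : ℝ → ℝ → ℝ) (x : Fin v → ℝ) : ℝ :=
  (v.factorial : ℝ)⁻¹ * ∑ σ : Equiv.Perm (Fin v), ∏ e ∈ E, W (x (σ e.1)) (x (σ e.2))

/-- `T[Sym[W]](x) = ∫_{[0,1]^{v-1}} Sym[W](x, x₂, …, x_v) dx₂⋯dx_v`. -/
def TSymW [NeZero v] (E : Finset (Fin v × Fin v)) (W : ℝ → ℝ → ℝ) (x : ℝ) : ℝ :=
  ∫ z, symW E W (Function.update z 0 x) ∂(unifCube v)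

/-- `∫_{[0,1]^{v-1}} Sym[W](x, x₂, …, x_v) ∏_{a=2}^v f(x_a) dx₂⋯dx_v`. -/
def symWf [NeZero v] (E : Finset (Fin v × Fin v)) (W : ℝ → ℝ → ℝ) (f : ℝ → ℝ) (x : ℝ) : ℝ :=
  ∫ z, symW E W (Function.update z 0 x) * ∏ a ∈ Finset.univ.erase (0 : Fin v), f (z a)
    ∂(unifCube v)

/-- `G_W(f)`. -/
def GW (E : Finset (Fin v × Fin v)) (W : ℝ → ℝ → ℝ) (f : ℝ → ℝ) : ℝ :=
  ∫ z, edgeProd E W z * ∏ a, f (z a) ∂(unifCube v)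

/-- Membership in the class `𝓛` of measurable functions `[0,1] → cl(N)` with
`∫₀¹ |f|^p < ∞`. -/
def MemL (μ : Measure ℝ) (p : ℝ) (f : ℝ → ℝ) : Prop :=
  Measurable f ∧ (∀ x ∈ Icc (0:ℝ) 1, f x ∈ closure (Ndom μ)) ∧
    (∫⁻ x in Icc (0:ℝ) 1, ENNReal.ofReal (|f x| ^ p)) < ⊤

/-- The objective functional `θ G_W(f) − ∫₀¹ γ(β(f(x))) dx`. -/
def objective (μ : Measure ℝ) (E : Finset (Fin v × Fin v)) (W : ℝ → ℝ → ℝ) (θ : ℝ)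
    (f : ℝ → ℝ) : ℝ :=
  θ * GW E W f - (∫⁻ x in Icc (0:ℝ) 1, gb μ (f x)).toReal

/-- `f` is a maximizer of the variational problem
`sup { θ G_W(f) − ∫₀¹ γ(β(f)) : f ∈ 𝓛, ∫₀¹ γ(β(f)) < ∞ }`. -/
def IsMaximizer (μ : Measure ℝ) (p : ℝ) (E : Finset (Fin v × Fin v)) (W : ℝ → ℝ → ℝ)
    (θ : ℝ) (f : ℝ → ℝ) : Prop :=
  MemL μ p f ∧ (∫⁻ x in Icc (0:ℝ) 1, gb μ (f x)) < ⊤ ∧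
    ∀ g : ℝ → ℝ, MemL μ p g → (∫⁻ x in Icc (0:ℝ) 1, gb μ (g x)) < ⊤ →
      objective μ E W θ g ≤ objective μ E W θ f


/-- Hölder's inequality for several functions on a probability space, with weights of total mass
at most `1`: the missing weight is given to the constant function `1`. -/
theorem lintegral_prod_rpow_le_of_sum_le_one {α ι : Type*} [MeasurableSpace α] {μ : Measure α}
    [IsProbabilityMeasure μ] (s : Finset ι) {f : ι → α → ℝ≥0∞} (hf : ∀ i ∈ s, Measurable (f i))
    {c : ι → ℝ} (hc : ∑ i ∈ s, c i ≤ 1) (hc0 : ∀ i ∈ s, 0 ≤ c i) :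
    ∫⁻ a, ∏ i ∈ s, f i a ^ c i ∂μ ≤ ∏ i ∈ s, (∫⁻ a, f i a ∂μ) ^ c i := by
  have h := ENNReal.lintegral_mul_prod_norm_pow_le (μ := μ) s (g := fun _ => 1) (f := f)
    aemeasurable_const (fun i hi => (hf i hi).aemeasurable) (1 - ∑ i ∈ s, c i) (p := c)
    (by ring) (by linarith) hc0
  simpa using h

/-- One integration step of Finner's inequality: the factors outside `A` are constant, so only the
weights of the factors in `A` matter. -/
theorem lintegral_prod_rpow_le_of_const {α ι : Type*} [MeasurableSpace α] [Nonempty α]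
    [DecidableEq ι] {μ : Measure α} [IsProbabilityMeasure μ] (s A : Finset ι) (hA : A ⊆ s)
    {f : ι → α → ℝ≥0∞} (hf : ∀ i ∈ s, Measurable (f i))
    (hconst : ∀ i ∈ s, i ∉ A → ∀ x y, f i x = f i y)
    {c : ι → ℝ} (hc : ∑ i ∈ A, c i ≤ 1) (hc0 : ∀ i ∈ s, 0 ≤ c i) :
    ∫⁻ a, ∏ i ∈ s, f i a ^ c i ∂μ ≤ ∏ i ∈ s, (∫⁻ a, f i a ∂μ) ^ c i := by
  obtain ⟨x₀⟩ := ‹Nonempty α›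
  have hint : ∀ i ∈ s \ A, ∫⁻ a, f i a ∂μ = f i x₀ := by
    intro i hi
    rw [Finset.mem_sdiff] at hi
    rw [lintegral_congr fun x => hconst i hi.1 hi.2 x x₀]
    simp
  have hpt : ∀ a, ∏ i ∈ s, f i a ^ c i
      = (∏ i ∈ s \ A, f i x₀ ^ c i) * ∏ i ∈ A, f i a ^ c i := by
    intro a
    rw [← Finset.prod_sdiff hA]
    congr 1
    refine Finset.prod_congr rfl fun i hi => ?_
    rw [Finset.mem_sdiff] at hi
    rw [hconst i hi.1 hi.2 a x₀]
  simp_rw [hpt]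
  rw [lintegral_const_mul _ (Finset.measurable_fun_prod _ fun i hi =>
    (hf i (hA hi)).pow_const _), ← Finset.prod_sdiff hA]
  refine mul_le_mul' (le_of_eq ?_) ?_
  · exact Finset.prod_congr rfl fun i hi => by rw [hint i hi]
  · exact lintegral_prod_rpow_le_of_sum_le_one A (fun i hi => hf i (hA hi)) hc
      fun i hi => hc0 i (hA hi)

/-- **Finner's inequality**: `A i` indexes the factors that may depend on the `i`-th coordinate, and
the weights of these factors add up to at most `1`. -/
theorem lintegral_prod_rpow_le_of_dependsOn {δ ι X : Type*} [Fintype δ] [DecidableEq δ]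
    [DecidableEq ι] [MeasurableSpace X] {μ : Measure X} [IsProbabilityMeasure μ]
    (s : Finset ι) (A : δ → Finset ι) (hA : ∀ i, A i ⊆ s)
    {f : ι → (δ → X) → ℝ≥0∞} (hf : ∀ e ∈ s, Measurable (f e))
    (hconst : ∀ i, ∀ e ∈ s, e ∉ A i → ∀ x t, f e (Function.update x i t) = f e x)
    {c : ι → ℝ} (hc : ∀ i, ∑ e ∈ A i, c e ≤ 1) (hc0 : ∀ e ∈ s, 0 ≤ c e) :
    ∫⁻ z, ∏ e ∈ s, f e z ^ c e ∂(Measure.pi fun _ : δ => μ)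
      ≤ ∏ e ∈ s, (∫⁻ z, f e z ∂(Measure.pi fun _ : δ => μ)) ^ c e := by
  have hX : Nonempty X := nonempty_of_isProbabilityMeasure μ
  have hF : Measurable fun z => ∏ e ∈ s, f e z ^ c e :=
    Finset.measurable_fun_prod _ fun e he => (hf e he).pow_const _
  have key : ∀ (t : Finset δ) (x : δ → X),
      lmarginal (fun _ => μ) t (fun z => ∏ e ∈ s, f e z ^ c e) x
        ≤ ∏ e ∈ s, (lmarginal (fun _ => μ) t (f e) x) ^ c e := by
    intro t
    induction t using Finset.induction_on with
    | empty => intro x; simp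
    | insert i t hi ih =>
      intro x
      rw [lmarginal_insert _ hF hi]
      calc _ ≤ ∫⁻ xi, ∏ e ∈ s,
              (lmarginal (fun _ => μ) t (f e) (Function.update x i xi)) ^ c e ∂μ :=
            lintegral_mono fun xi => ih _
        _ ≤ ∏ e ∈ s, (∫⁻ xi,
              lmarginal (fun _ => μ) t (f e) (Function.update x i xi) ∂μ) ^ c e := by
            refine lintegral_prod_rpow_le_of_const s (A i) (hA i)
              (f := fun e xi => lmarginal (fun _ => μ) t (f e) (Function.update x i xi))
              (fun e he => ((hf e he).lmarginal _).comp (measurable_update x)) ?_ (hc i) hc0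
            intro e he heA a b
            have : ∀ r, f e ∘ (fun z => Function.update z i r) = f e :=
              fun r => funext fun z => hconst i e he heA z r
            rw [lmarginal_update_of_notMem (hf e he) hi, lmarginal_update_of_notMem (hf e he) hi,
              this, this]
        _ = _ := Finset.prod_congr rfl fun e he => by rw [lmarginal_insert _ (hf e he) hi]
  obtain ⟨x₀⟩ := hX
  have := key Finset.univ fun _ => x₀
  simpa only [lmarginal_univ] using this

/-- Two distinct coordinates of an i.i.d. family are jointly distributed as a product. -/
theorem map_pair_pi {δ X : Type*} [Fintype δ] [MeasurableSpace X] {μ : Measure X}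
    [IsProbabilityMeasure μ] {a b : δ} (hab : a ≠ b) :
    (Measure.pi fun _ : δ => μ).map (fun z => (z a, z b)) = μ.prod μ := by
  have hind := ProbabilityTheory.iIndepFun_pi (μ := fun _ : δ => μ) (X := fun _ x => x)
    fun _ => aemeasurable_id'
  have h := (ProbabilityTheory.indepFun_iff_map_prod_eq_prod_map_map
    (measurable_pi_apply a).aemeasurable (measurable_pi_apply b).aemeasurable).1
    (hind.indepFun hab)
  have hev : ∀ i, (Measure.pi fun _ : δ => μ).map (fun z => z i) = μ := fun i =>
    (measurePreserving_eval (fun _ : δ => μ) i).map_eq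
  rw [hev, hev] at h
  exact h

/-- A function of the first components of two distinct sample points integrates as over the unit
square. -/
theorem lintegral_pi_fst_pair {v : ℕ} {ν : Measure (ℝ × ℝ)} [IsProbabilityMeasure ν]
    (hmarg : ν.map Prod.fst = volume.restrict (Icc (0:ℝ) 1)) {a b : Fin v} (hab : a ≠ b)
    {g : ℝ × ℝ → ℝ≥0∞} (hg : Measurable g) :
    ∫⁻ z, g ((z a).1, (z b).1) ∂(Measure.pi fun _ : Fin v => ν) = ∫⁻ u, g u ∂unifSq := by
  have h : unifSq = (Measure.pi fun _ : Fin v => ν).map (fun z => ((z a).1, (z b).1)) := by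
    rw [unifSq, ← hmarg, Measure.map_prod_map _ _ measurable_fst measurable_fst,
      ← map_pair_pi hab, Measure.map_map (by fun_prop) (by fun_prop)]
    rfl
  rw [h, lintegral_map hg (by fun_prop)]

theorem card_filter_le_maxDeg {v : ℕ} (E : Finset (Fin v × Fin v)) (i : Fin v) :
    (E.filter fun e => e.1 = i ∨ e.2 = i).card ≤ maxDeg E :=
  Finset.le_sup (f := fun a => (E.filter fun e => e.1 = a ∨ e.2 = a).card) (Finset.mem_univ i)

theorem maxDeg_pos {v : ℕ} {E : Finset (Fin v × Fin v)} (hE : E.Nonempty) : 0 < maxDeg E := by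
  obtain ⟨e, he⟩ := hE
  exact (Finset.card_pos.2 ⟨e, by simp [he]⟩).trans_le (card_filter_le_maxDeg E e.1)

/-- The bound on the `L^q` norm of the product over the edges. -/
theorem edge_moment_le {v : ℕ} (E : Finset (Fin v × Fin v)) (hE : ∀ e ∈ E, e.1 ≠ e.2)
    {q : ℝ} (hq : 1 < q) {W : ℝ → ℝ → ℝ} (hWm : Measurable fun z : ℝ × ℝ => W z.1 z.2)
    {ν : Measure (ℝ × ℝ)} [IsProbabilityMeasure ν]
    (hmarg : ν.map Prod.fst = volume.restrict (Icc (0:ℝ) 1)) :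
    (∫⁻ z : Fin v → ℝ × ℝ, (∏ e ∈ E, ENNReal.ofReal |W (z e.1).1 (z e.2).1|) ^ q
        ∂(Measure.pi fun _ : Fin v => ν)) ^ (1 / q)
      ≤ (eLpNorm (fun z : ℝ × ℝ => W z.1 z.2)
            (ENNReal.ofReal (q * (maxDeg E : ℝ))) unifSq) ^ E.card := by
  rcases E.eq_empty_or_nonempty with rfl | hne
  · simp
  have hq0 : 0 < q := by linarith
  have hD : (0 : ℝ) < maxDeg E := by exact_mod_cast maxDeg_pos hne
  set D : ℝ := (maxDeg E : ℝ) with hDdef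
  have hqD : 0 < q * D := mul_pos hq0 hD
  set g : ℝ × ℝ → ℝ≥0∞ := fun u => ENNReal.ofReal |W u.1 u.2| ^ (q * D) with hg
  have hgm : Measurable g := (hWm.abs.ennreal_ofReal).pow_const _
  have hfin := lintegral_prod_rpow_le_of_dependsOn (μ := ν) E
    (fun i => E.filter fun e => e.1 = i ∨ e.2 = i) (fun i => Finset.filter_subset _ _)
    (f := fun e z => g ((z e.1).1, (z e.2).1)) (c := fun _ => 1 / D)
    (fun e _ => hgm.comp (by fun_prop))
    (by
      intro i e he hei x t
      simp only [Finset.mem_filter, he, true_and, not_or] at hei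
      simp [Function.update_of_ne hei.1, Function.update_of_ne hei.2])
    (by
      intro i
      rw [Finset.sum_const, nsmul_eq_mul, mul_one_div, div_le_one hD]
      exact Nat.cast_le.2 (card_filter_le_maxDeg E i))
    (fun _ _ => by positivity)
  have hpt : ∀ z : Fin v → ℝ × ℝ, (∏ e ∈ E, ENNReal.ofReal |W (z e.1).1 (z e.2).1|) ^ q
      = ∏ e ∈ E, g ((z e.1).1, (z e.2).1) ^ (1 / D) := by
    intro z
    rw [← ENNReal.prod_rpow_of_nonneg hq0.le]
    refine Finset.prod_congr rfl fun e _ => ?_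
    rw [hg, ← ENNReal.rpow_mul]
    congr 1
    field_simp
  have hnorm : eLpNorm (fun z : ℝ × ℝ => W z.1 z.2) (ENNReal.ofReal (q * D)) unifSq
      = (∫⁻ u, g u ∂unifSq) ^ (1 / (q * D)) := by
    rw [eLpNorm_eq_lintegral_rpow_enorm_toReal (by simpa using hqD) ENNReal.ofReal_ne_top,
      ENNReal.toReal_ofReal hqD.le]
    simp only [hg, Real.enorm_eq_ofReal_abs]
  simp_rw [hpt]
  calc _ ≤ (∏ e ∈ E, (∫⁻ z, g ((z e.1).1, (z e.2).1)
              ∂(Measure.pi fun _ : Fin v => ν)) ^ (1 / D)) ^ (1 / q) :=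
        ENNReal.rpow_le_rpow hfin (by positivity)
    _ = (∏ e ∈ E, (∫⁻ u, g u ∂unifSq) ^ (1 / D)) ^ (1 / q) := by
        congr 1
        exact Finset.prod_congr rfl fun e he => by
          rw [lintegral_pi_fst_pair hmarg (hE e he) hgm]
    _ = _ := by
        rw [hnorm, Finset.prod_const, ← ENNReal.rpow_natCast, ← ENNReal.rpow_natCast,
          ← ENNReal.rpow_mul, ← ENNReal.rpow_mul, ← ENNReal.rpow_mul]
        congr 1
        field_simp

/-- Hölder-type bound for graph moments: for `ν` on `[0,1]×ℝ` with
uniform first marginal and `(U_a,V_a) ~ ν` i.i.d.,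
`E[(∏_{(a,b)∈E} |W(U_a,U_b)|)|φ(V)|] ≤ ‖W‖_{qΔ}^{|E|} (E|φ(V)|^p)^{1/p}`. -/
theorem statement11
    (v : ℕ) (hv : 2 ≤ v)
    (E : Finset (Fin v × Fin v)) (hE : ∀ e ∈ E, e.1 ≠ e.2)
    (p q : ℝ) (hp : 1 ≤ p) (hq : 1 < q) (hpq : 1/p + 1/q ≤ 1)
    (W : ℝ → ℝ → ℝ) (hWm : Measurable fun z : ℝ × ℝ => W z.1 z.2)
    (hWsym : ∀ x y, W x y = W y x)
    (ν : Measure (ℝ × ℝ)) [IsProbabilityMeasure ν]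
    (hmarg : ν.map Prod.fst = volume.restrict (Icc (0:ℝ) 1))
    (φ : (Fin v → ℝ) → ℝ) (hφ : Measurable φ) :
    (∫⁻ z : Fin v → ℝ × ℝ,
        (∏ e ∈ E, ENNReal.ofReal |W (z e.1).1 (z e.2).1|) *
          ENNReal.ofReal |φ (fun a => (z a).2)| ∂(Measure.pi fun _ : Fin v => ν))
      ≤ (eLpNorm (fun z : ℝ × ℝ => W z.1 z.2)
            (ENNReal.ofReal (q * (maxDeg E : ℝ))) unifSq) ^ E.card *
        (∫⁻ z : Fin v → ℝ × ℝ,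
            ENNReal.ofReal (|φ (fun a => (z a).2)| ^ p)
              ∂(Measure.pi fun _ : Fin v => ν)) ^ (1/p) := by
  have hp0 : 0 < p := by linarith
  have hq0 : 0 < q := by linarith
  have hFm : Measurable fun z : Fin v → ℝ × ℝ =>
      ∏ e ∈ E, ENNReal.ofReal |W (z e.1).1 (z e.2).1| :=
    Finset.measurable_fun_prod _ fun e _ =>
      (hWm.comp (g := fun u : ℝ × ℝ => W u.1 u.2)
        (f := fun z : Fin v → ℝ × ℝ => ((z e.1).1, (z e.2).1)) (by fun_prop)).abs.ennreal_ofReal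
  have hφm : Measurable fun z : Fin v → ℝ × ℝ => ENNReal.ofReal |φ (fun a => (z a).2)| :=
    (hφ.comp (by fun_prop)).abs.ennreal_ofReal
  have hol := lintegral_prod_rpow_le_of_sum_le_one (μ := Measure.pi fun _ : Fin v => ν)
    (Finset.univ : Finset (Fin 2))
    (f := ![fun z => (∏ e ∈ E, ENNReal.ofReal |W (z e.1).1 (z e.2).1|) ^ q,
      fun z => ENNReal.ofReal |φ (fun a => (z a).2)| ^ p]) (c := ![1 / q, 1 / p])
    (by
      intro i _
      fin_cases i
      · exact hFm.pow_const _
      · exact hφm.pow_const _)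
    (by simp only [Fin.sum_univ_two, Matrix.cons_val_zero, Matrix.cons_val_one]; linarith)
    (by
      intro i _
      fin_cases i
      · exact (one_div_pos.2 hq0).le
      · exact (one_div_pos.2 hp0).le)
  simp only [Fin.prod_univ_two, Matrix.cons_val_zero, Matrix.cons_val_one, ← ENNReal.rpow_mul,
    mul_one_div_cancel hq0.ne', mul_one_div_cancel hp0.ne', ENNReal.rpow_one] at hol
  refine hol.trans (mul_le_mul' (edge_moment_le E hE hq hWm hmarg) (le_of_eq ?_))
  simp_rw [ENNReal.ofReal_rpow_of_nonneg (abs_nonneg _) hp0.le]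

end GibbsMulti
end
end

section
/- Fix v ≥ 2, q > 1, a finite simple graph H on vertex set [v] with edge set E(H) and maximum degree Δ, and a symmetric measurable W : [0,1]² → ℝ. Let U₁,…,U_v be i.i.d. Unif[0,1]. Then E[ ( Sym[|W|](U₁,…,U_v) )^q ] ≤ ‖W‖_{L^{qΔ}([0,1]²)}^{q|E(H)|}. -/
/-!
By Jensen (`q > 1`), the `q`-th moment of the average over permutations is at most the average of
the `q`-th moments, so it suffices to bound `E ∏_{(a,b) ∈ E} |W(U_{σ a}, U_{σ b})|^q` for one
permutation `σ` (`single_perm_bound`). Every variable occurs in at most `Δ` factors of this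
product, so Finner's generalized Hölder inequality with all exponents equal to `Δ` (`finner`)
bounds it by `∏_{e ∈ E} (∫ |W|^{qΔ})^{1/Δ} = ‖W‖_{qΔ}^{q|E|}`. Finner's inequality is proved by
integrating out one variable at a time, using the ordinary Hölder inequality for the factors
containing that variable (`holder_one_var`).
-/

open MeasureTheory Filter Set
open scoped ENNReal NNReal

noncomputable section

namespace GibbsMulti

variable {v : ℕ}

/-- Hölder in one variable, at equal exponents `1/D`, for at most `D` functions on a probability
space; the missing exponent is put on the constant function `1`. -/
lemma holder_one_var {α ι : Type*} [MeasurableSpace α] {ν : Measure α} [IsProbabilityMeasure ν]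
    (T : Finset ι) (D : ℕ) (hD : 0 < D) (hT : T.card ≤ D) (f : ι → α → ℝ≥0∞)
    (hf : ∀ i ∈ T, Measurable (f i)) :
    ∫⁻ a, ∏ i ∈ T, f i a ^ ((D : ℝ)⁻¹) ∂ν ≤ ∏ i ∈ T, (∫⁻ a, f i a ∂ν) ^ ((D : ℝ)⁻¹) := by
  have hD' : (0 : ℝ) < D := by exact_mod_cast hD
  have hT' : (T.card : ℝ) ≤ D := by exact_mod_cast hT
  have h := ENNReal.lintegral_mul_prod_norm_pow_le (μ := ν) T (g := fun _ => 1) (f := f)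
    aemeasurable_const (fun i hi => (hf i hi).aemeasurable) (1 - T.card * (D : ℝ)⁻¹)
    (p := fun _ => (D : ℝ)⁻¹) (by simp)
    (by rw [sub_nonneg, ← div_eq_mul_inv, div_le_one hD']; exact hT')
    (fun _ _ => by positivity)
  simpa using h

/-- Finner's inequality with equal exponents `1/D`: the function `F e` depends only on the
coordinates `i` with `P e i`, and every coordinate is used by at most `D` of the functions.
Integrating out one coordinate `i ∉ s`, the factors not depending on `i` are constants and
`holder_one_var` handles the others. -/
lemma finner {ι δ : Type*} [DecidableEq δ] (ν : Measure ℝ) [IsProbabilityMeasure ν]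
    (T : Finset ι) (D : ℕ) (hD : 0 < D) (P : ι → δ → Prop)
    [∀ i, DecidablePred fun e => P e i]
    (hdeg : ∀ i, (T.filter fun e => P e i).card ≤ D)
    (F : ι → (δ → ℝ) → ℝ≥0∞) (hF : ∀ e, Measurable (F e))
    (hdep : ∀ e i, ¬ P e i → ∀ x t, F e (Function.update x i t) = F e x) (s : Finset δ)
    (x : δ → ℝ) :
    lmarginal (fun _ => ν) s (fun x => ∏ e ∈ T, F e x ^ ((D : ℝ)⁻¹)) x ≤
      ∏ e ∈ T, (lmarginal (fun _ => ν) s (F e) x) ^ ((D : ℝ)⁻¹) := by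
  induction s using Finset.induction generalizing x with
  | empty => simp
  | insert i s hi ih =>
    have hm : Measurable fun x => ∏ e ∈ T, F e x ^ ((D : ℝ)⁻¹) :=
      Finset.measurable_fun_prod _ fun e _ => (hF e).pow_const _
    rw [lmarginal_insert _ hm hi]
    refine (lintegral_mono fun t => ih _).trans ?_
    have hc : ∀ e, ¬ P e i → ∀ t, lmarginal (fun _ => ν) s (F e) (Function.update x i t)
        = lmarginal (fun _ => ν) s (F e) x := by
      intro e he t
      rw [lmarginal_update_of_notMem (hF e) hi]
      congr 1
      funext y
      exact hdep e i he y t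
    have hmeas : ∀ e, Measurable
        fun t => lmarginal (fun _ => ν) s (F e) (Function.update x i t) :=
      fun e => ((hF e).lmarginal _).comp (measurable_update x)
    simp_rw [lmarginal_insert _ (hF _) hi,
      ← Finset.prod_filter_mul_prod_filter_not T (fun e => P e i)]
    have h1 : ∀ t, ∏ e ∈ T with ¬ P e i,
        (lmarginal (fun _ => ν) s (F e) (Function.update x i t)) ^ ((D : ℝ)⁻¹) =
        ∏ e ∈ T with ¬ P e i, (lmarginal (fun _ => ν) s (F e) x) ^ ((D : ℝ)⁻¹) :=
      fun t => Finset.prod_congr rfl fun e he => by rw [hc e (Finset.mem_filter.1 he).2]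
    have h2 : ∏ e ∈ T with ¬ P e i,
        (∫⁻ t, lmarginal (fun _ => ν) s (F e) (Function.update x i t) ∂ν) ^ ((D : ℝ)⁻¹) =
        ∏ e ∈ T with ¬ P e i, (lmarginal (fun _ => ν) s (F e) x) ^ ((D : ℝ)⁻¹) :=
      Finset.prod_congr rfl fun e he => by simp [hc e (Finset.mem_filter.1 he).2]
    simp_rw [h1]
    rw [h2, lintegral_mul_const _
      (Finset.measurable_fun_prod _ fun e _ => (hmeas e).pow_const _)]
    gcongr
    exact holder_one_var _ D hD (hdeg i) _ fun e _ => hmeas e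

instance : IsProbabilityMeasure (volume.restrict (Icc (0:ℝ) 1)) := ⟨by simp⟩

/-- Two distinct coordinates of a uniform point of the cube are uniform on the square. -/
lemma lintegral_two_coord {v : ℕ} {a b : Fin v} (hab : a ≠ b) {g : ℝ × ℝ → ℝ≥0∞}
    (hg : Measurable g) :
    ∫⁻ z, g (z a, z b) ∂(unifCube v) = ∫⁻ p, g p ∂unifSq := by
  have hind := (ProbabilityTheory.iIndepFun_pi (μ := fun _ : Fin v =>
    volume.restrict (Icc (0:ℝ) 1)) (X := fun _ => id) fun _ => aemeasurable_id).indepFun hab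
  have hmap := hind.map_prod_eq_prod_map_map (measurable_pi_apply a).aemeasurable
    (measurable_pi_apply b).aemeasurable
  have he : ∀ c : Fin v, Measure.map (fun ω : Fin v → ℝ => ω c)
      (Measure.pi fun _ => volume.restrict (Icc (0:ℝ) 1)) = volume.restrict (Icc (0:ℝ) 1) :=
    fun c => (measurePreserving_eval (fun _ : Fin v => volume.restrict (Icc (0:ℝ) 1)) c).map_eq
  rw [he, he] at hmap
  rw [unifSq, ← hmap, lintegral_map hg (by fun_prop)]
  rfl

/-- The bound for a single term of the symmetrization: `finner` with `F e = |W|^{qΔ}` evaluated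
at the endpoints of the edge `e` relabelled by `σ`. -/
lemma single_perm_bound {v : ℕ} (E : Finset (Fin v × Fin v)) (hE : ∀ e ∈ E, e.1 ≠ e.2)
    (q : ℝ) (hq : 1 < q) (W : ℝ → ℝ → ℝ) (hWm : Measurable fun z : ℝ × ℝ => W z.1 z.2)
    (σ : Equiv.Perm (Fin v)) (hD : 0 < maxDeg E) :
    (∫⁻ z : Fin v → ℝ,
        ENNReal.ofReal ((∏ e ∈ E, |W (z (σ e.1)) (z (σ e.2))|) ^ q) ∂(unifCube v))
      ≤ (eLpNorm (fun z : ℝ × ℝ => W z.1 z.2)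
          (ENNReal.ofReal (q * (maxDeg E : ℝ))) unifSq) ^ (q * (E.card : ℝ)) := by
  set D := maxDeg E with hDdef
  have hD' : (0 : ℝ) < D := by exact_mod_cast hD
  have hq0 : 0 < q := by linarith
  let G : ℝ × ℝ → ℝ≥0∞ := fun p => ‖W p.1 p.2‖ₑ ^ (q * (D : ℝ))
  have hG : Measurable G := hWm.enorm.pow_const _
  have hint : ∀ z : Fin v → ℝ,
      ENNReal.ofReal ((∏ e ∈ E, |W (z (σ e.1)) (z (σ e.2))|) ^ q) =
        ∏ e ∈ E, G (z (σ e.1), z (σ e.2)) ^ ((D : ℝ)⁻¹) := by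
    intro z
    rw [← Real.finsetProd_rpow _ _ (fun _ _ => abs_nonneg _),
      ENNReal.ofReal_prod_of_nonneg (fun _ _ => by positivity)]
    refine Finset.prod_congr rfl fun e _ => ?_
    simp only [G]
    rw [← ENNReal.rpow_mul, mul_assoc, mul_inv_cancel₀ hD'.ne', mul_one,
      ← ENNReal.ofReal_rpow_of_nonneg (abs_nonneg _) hq0.le, Real.enorm_eq_ofReal_abs]
  simp_rw [hint]
  have hdeg : ∀ i, (E.filter fun e => σ e.1 = i ∨ σ e.2 = i).card ≤ D := by
    intro i
    have h := Finset.le_sup (f := fun a => (E.filter fun e => e.1 = a ∨ e.2 = a).card)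
      (Finset.mem_univ (σ.symm i))
    simp only [← Equiv.eq_symm_apply]
    exact h
  have key := finner (volume.restrict (Icc (0:ℝ) 1)) E D hD
    (fun e i => σ e.1 = i ∨ σ e.2 = i) hdeg (fun e z => G (z (σ e.1), z (σ e.2)))
    (fun e => hG.comp (by fun_prop))
    (fun e i h x t => by
      obtain ⟨h1, h2⟩ := not_or.1 h
      simp [Function.update_of_ne h1, Function.update_of_ne h2]) Finset.univ 0
  simp only [lmarginal_univ] at key
  refine key.trans (le_of_eq ?_)
  have hval : ∀ e ∈ E, (∫⁻ z : Fin v → ℝ, G (z (σ e.1), z (σ e.2))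
      ∂(Measure.pi fun _ => volume.restrict (Icc (0:ℝ) 1))) ^ ((D : ℝ)⁻¹)
      = (∫⁻ p, G p ∂unifSq) ^ ((D : ℝ)⁻¹) := fun e he => by
    rw [← lintegral_two_coord (σ.injective.ne (hE e he)) hG, unifCube]
  have hqD : 0 < q * (D : ℝ) := by positivity
  rw [Finset.prod_congr rfl hval, Finset.prod_const,
    eLpNorm_eq_lintegral_rpow_enorm_toReal (by simpa using hqD) ENNReal.ofReal_ne_top,
    ENNReal.toReal_ofReal hqD.le, ← ENNReal.rpow_natCast, ← ENNReal.rpow_mul,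
    ← ENNReal.rpow_mul]
  congr 1
  field_simp

/-- `E[(Sym[|W|](U₁,…,U_v))^q] ≤ ‖W‖_{L^{qΔ}}^{q|E(H)|}` for i.i.d.
uniform `U₁,…,U_v`. -/
theorem statement12
    (v : ℕ) (hv : 2 ≤ v)
    (E : Finset (Fin v × Fin v)) (hE : ∀ e ∈ E, e.1 ≠ e.2)
    (q : ℝ) (hq : 1 < q)
    (W : ℝ → ℝ → ℝ) (hWm : Measurable fun z : ℝ × ℝ => W z.1 z.2)
    (hWsym : ∀ x y, W x y = W y x) :
    (∫⁻ z : Fin v → ℝ,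
        ENNReal.ofReal (symW E (fun x y => |W x y|) z ^ q) ∂(unifCube v))
      ≤ (eLpNorm (fun z : ℝ × ℝ => W z.1 z.2)
          (ENNReal.ofReal (q * (maxDeg E : ℝ))) unifSq) ^ (q * (E.card : ℝ)) := by
  have hq0 : 0 < q := by linarith
  rcases Nat.eq_zero_or_pos (maxDeg E) with h0 | hD
  · -- A graph of maximum degree `0` has no edges, and both sides equal `1`.
    have hE0 : E = ∅ := by
      refine Finset.eq_empty_of_forall_notMem fun e he => ?_
      have h := Finset.le_sup (f := fun a => (E.filter fun e => e.1 = a ∨ e.2 = a).card)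
        (Finset.mem_univ e.1)
      have h' : (E.filter fun e' => e'.1 = e.1 ∨ e'.2 = e.1).card ≤ 0 := h.trans h0.le
      exact (Finset.card_pos.2 ⟨e, by simp [he]⟩).not_ge h'
    subst hE0
    have hv0 : (v.factorial : ℝ) ≠ 0 := by positivity
    have hs : ∀ z, symW (∅ : Finset (Fin v × Fin v)) (fun x y => |W x y|) z = 1 := by
      intro z
      simp [symW, Fintype.card_perm, hv0]
    simp [hs, unifCube]
  · set B := (eLpNorm (fun z : ℝ × ℝ => W z.1 z.2)
          (ENNReal.ofReal (q * (maxDeg E : ℝ))) unifSq) ^ (q * (E.card : ℝ)) with hB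
    have hw : ∑ _σ : Equiv.Perm (Fin v), (v.factorial : ℝ)⁻¹ = 1 := by
      have hv0 : (v.factorial : ℝ) ≠ 0 := by positivity
      simp [Fintype.card_perm, hv0]
    -- Jensen: the `q`-th power of the average is at most the average of the `q`-th powers.
    have hJ : ∀ z : Fin v → ℝ, ENNReal.ofReal (symW E (fun x y => |W x y|) z ^ q) ≤
        ∑ σ : Equiv.Perm (Fin v), ENNReal.ofReal (v.factorial : ℝ)⁻¹ *
          ENNReal.ofReal ((∏ e ∈ E, |W (z (σ e.1)) (z (σ e.2))|) ^ q) := by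
      intro z
      have h := Real.rpow_arith_mean_le_arith_mean_rpow Finset.univ
        (fun _ : Equiv.Perm (Fin v) => (v.factorial : ℝ)⁻¹)
        (fun σ => ∏ e ∈ E, |W (z (σ e.1)) (z (σ e.2))|) (fun _ _ => by positivity) hw
        (fun _ _ => by positivity) hq.le
      rw [symW, Finset.mul_sum]
      refine (ENNReal.ofReal_le_ofReal h).trans (le_of_eq ?_)
      rw [ENNReal.ofReal_sum_of_nonneg (fun _ _ => by positivity)]
      exact Finset.sum_congr rfl fun σ _ => ENNReal.ofReal_mul (by positivity)
    have hmeas : ∀ σ : Equiv.Perm (Fin v), Measurable fun z : Fin v → ℝ =>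
        ENNReal.ofReal ((∏ e ∈ E, |W (z (σ e.1)) (z (σ e.2))|) ^ q) := by
      intro σ
      refine ((Finset.measurable_fun_prod _ fun e _ => ?_).pow_const q).ennreal_ofReal
      have hpair : Measurable fun z : Fin v → ℝ => (z (σ e.1), z (σ e.2)) := by fun_prop
      exact (hWm.comp hpair).norm
    refine (lintegral_mono hJ).trans ?_
    rw [lintegral_finsetSum _ fun σ _ => (hmeas σ).const_mul _]
    simp_rw [lintegral_const_mul _ (hmeas _)]
    calc _ ≤ ∑ _σ : Equiv.Perm (Fin v), ENNReal.ofReal (v.factorial : ℝ)⁻¹ * B := by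
          gcongr with σ
          exact single_perm_bound E hE q hq W hWm σ hD
      _ = B := by
          rw [← Finset.sum_mul, ← ENNReal.ofReal_sum_of_nonneg (fun _ _ => by positivity), hw,
            ENNReal.ofReal_one, one_mul]

end GibbsMulti
end
end

section
/- Fix v ≥ 2, a finite simple graph H on vertex set [v] with edge set E(H) and maximum degree Δ, real numbers p, q > 1 with 1/p + 1/q ≤ 1, an integer n ≥ v, a symmetric n×n real matrix Q with zero diagonal, and x₁,…,x_n ∈ ℝ. Define Sym[Q](i₁,…,i_v) := (1/v!) Σ_{σ∈S_v} ∏_{(a,b)∈E(H)} Q(i_{σ(a)}, i_{σ(b)}) and, for i ∈ [n], m_i := (v/n^{v−1}) Σ_{(i₂,…,i_v)∈S(n,v,i)} Sym[Q](i,i₂,…,i_v) ∏_{a=2}^{v} x_{i_a}, where S(n,v,i) is the set of (v−1)-tuples of pairwise distinct indices in [n] all different from i. Then (1/n) Σ_{i=1}^{n} |m_i|^q ≤ v^q · ( (1/n) Σ_{j=1}^{n} |x_j|^p )^{q(v−1)/p} · ‖W_Q‖_{L^{qΔ}([0,1]²)}^{q|E(H)|}. -/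
/-!
All norms are taken with respect to uniform probability measures, written as means `avg` of
`ℝ≥0`-valued functions. After the triangle inequality, `|m_i|` is at most `v` times the mean over
`z = (i₂,…,i_v)` of `|Sym[Q](i,z)| ∏ |x_{z_b}|` (`locMag_bound`). Since `1/p + 1/q ≤ 1` and the
measure is a probability measure, Hölder (`holder_two`) separates the `L^q` norm of
`Sym[Q](i,·)` from the `L^p` norm of `∏ |x_{z_b}|`; the latter is `‖x‖_p^{v-1}` because the entries
of `z` are independent. Raising to the power `q` and averaging over `i` leaves the mean of
`|Sym[Q]|^q` over all `v`-tuples.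

By convexity and invariance under permutations of the tuple, that mean is at most the mean of
`∏_{(a,b) ∈ E} |Q(g_a,g_b)|^q` (`symQ_bound`). Each vertex lies in at most `Δ` edges, so Finner's
generalised Hölder inequality (`finner`), proved by integrating out one vertex at a time, bounds it
by the product over the edges of the `L^Δ` norms of `|Q|^q`, which is `‖W_Q‖_{qΔ}^{q|E|}`
(`graph_bound`).
-/

open MeasureTheory Filter Set
open scoped ENNReal NNReal

noncomputable section

namespace GibbsMulti

variable {v : ℕ}

/-- `Sym[Q](i₁,…,i_v)` for a matrix `Q`, with the tuple given by `g : Fin v → Fin n`. -/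
def symQ {v n : ℕ} (E : Finset (Fin v × Fin v)) (Q : Fin n → Fin n → ℝ)
    (g : Fin v → Fin n) : ℝ :=
  (v.factorial : ℝ)⁻¹ * ∑ σ : Equiv.Perm (Fin v), ∏ e ∈ E, Q (g (σ e.1)) (g (σ e.2))

open Classical in
/-- The local magnetization
`m_i = (v/n^{v−1}) Σ_{(i₂,…,i_v) ∈ S(n,v,i)} Sym[Q](i,i₂,…,i_v) ∏_{a=2}^v x_{i_a}`,
the sum being over tuples `g : Fin v → Fin n` of pairwise distinct indices with `g 0 = i`. -/
def locMag (v : ℕ) [NeZero v] {n : ℕ} (E : Finset (Fin v × Fin v))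
    (Q : Fin n → Fin n → ℝ) (x : Fin n → ℝ) (i : Fin n) : ℝ :=
  ((v : ℝ) / (n : ℝ) ^ (v - 1)) *
    ∑ g ∈ Finset.univ.filter
        (fun g : Fin v → Fin n => Function.Injective g ∧ g 0 = i),
      symQ E Q g * ∏ a ∈ Finset.univ.erase (0 : Fin v), x (g a)

/-! ### Means over finite types -/

/-- The mean of `f` over a finite type; every norm in the proof is taken with respect to it. -/
def avg {α : Type*} [Fintype α] (f : α → ℝ≥0) : ℝ≥0 :=
  (Fintype.card α : ℝ≥0)⁻¹ * ∑ a, f a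

lemma avg_mono {α : Type*} [Fintype α] {f g : α → ℝ≥0} (h : ∀ a, f a ≤ g a) :
    avg f ≤ avg g := by
  unfold avg
  gcongr with a
  exact h a

lemma avg_const {α : Type*} [Fintype α] [Nonempty α] (c : ℝ≥0) :
    avg (fun _ : α => c) = c := by
  have : (Fintype.card α : ℝ≥0) ≠ 0 := by simp
  simp [avg, this]

lemma avg_mul_const {α : Type*} [Fintype α] (f : α → ℝ≥0) (c : ℝ≥0) :
    avg (fun a => f a * c) = avg f * c := by
  simp [avg, ← Finset.sum_mul, mul_assoc]

lemma avg_equiv {α β : Type*} [Fintype α] [Fintype β] (e : α ≃ β) (f : β → ℝ≥0) :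
    avg (fun a => f (e a)) = avg f := by
  simp [avg, Fintype.card_congr e, Equiv.sum_comp e f]

lemma avg_prod {α β : Type*} [Fintype α] [Fintype β] (f : α → β → ℝ≥0) :
    avg (fun a => avg (f a)) = avg (fun x : α × β => f x.1 x.2) := by
  simp only [avg, ← Finset.mul_sum, Fintype.card_prod, Fintype.sum_prod_type, Nat.cast_mul,
    mul_inv]
  ring

lemma avg_comm {α β : Type*} [Fintype α] [Fintype β] (f : α → β → ℝ≥0) :
    avg (fun a => avg (f a)) = avg (fun b => avg (fun a => f a b)) := by
  simp only [avg, ← Finset.mul_sum]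
  rw [Finset.sum_comm]
  ring

lemma avg_cons {α : Type*} [Fintype α] {w : ℕ} (F : (Fin (w + 1) → α) → ℝ≥0) :
    avg F = avg (fun t : α => avg (fun z : Fin w → α => F (Fin.cons t z))) := by
  rw [avg_prod]
  exact (avg_equiv (Fin.consEquiv (fun _ : Fin (w + 1) => α)) F).symm

lemma avg_prod_pow {α : Type*} [Fintype α] (w : ℕ) (y : α → ℝ≥0) :
    avg (fun z : Fin w → α => ∏ b, y (z b)) = avg y ^ w := by
  simp [avg, mul_pow, Fintype.sum_pow]

/-- Resampling one coordinate of a uniform tuple does not change its law: the map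
`(t, g) ↦ (g a, update g a t)` is an involution. -/
lemma avg_update {V α : Type*} [Fintype V] [DecidableEq V] [Fintype α] [Nonempty α] (a : V)
    (F : (V → α) → ℝ≥0) :
    avg F = avg (fun g => avg (fun t => F (Function.update g a t))) := by
  have hinv : Function.Involutive
      (fun x : (V → α) × α => (Function.update x.1 a x.2, x.1 a)) := by
    rintro ⟨g, t⟩
    simp
  rw [avg_prod]
  refine Eq.trans ?_ (avg_equiv hinv.toPerm (fun x : (V → α) × α => F x.1)).symm
  rw [← avg_prod (fun (g : V → α) (_ : α) => F g)]
  simp only [avg_const]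

lemma avg_pair {V α : Type*} [Fintype V] [DecidableEq V] [Fintype α] [Nonempty α] {a b : V}
    (hab : a ≠ b) (φ : α → α → ℝ≥0) :
    avg (fun g : V → α => φ (g a) (g b)) = avg (fun s => avg (fun t => φ s t)) := by
  rw [avg_update a]
  simp only [Function.update_self, Function.update_of_ne hab.symm]
  rw [avg_update b]
  simp only [Function.update_self, avg_const]
  exact avg_comm _

/-! ### Hölder and Finner inequalities -/

/-- Hölder's inequality for means. The weights may sum to less than one: the missing mass is put
on the constant function `1`, whose mean is `1`. -/
lemma holder {α ι : Type*} [Fintype α] [Nonempty α] (s : Finset ι) (f : ι → α → ℝ≥0)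
    (r : ι → ℝ) (hr : ∀ i ∈ s, 0 ≤ r i) (hsum : ∑ i ∈ s, r i ≤ 1) :
    avg (fun a => ∏ i ∈ s, f i a ^ r i) ≤ ∏ i ∈ s, avg (f i) ^ r i := by
  let _ : MeasurableSpace α := ⊤
  have hc : (Fintype.card α : ℝ≥0) ≠ 0 := by simp
  let μ : Measure α := ((Fintype.card α : ℝ≥0)⁻¹ : ℝ≥0) • Measure.count
  have hμ : ∀ g : α → ℝ≥0, ∫⁻ a, (g a : ℝ≥0∞) ∂μ = (avg g : ℝ≥0∞) := by
    intro g
    rw [lintegral_smul_measure, lintegral_count, tsum_fintype, avg, ENNReal.smul_def,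
      smul_eq_mul]
    push_cast
    rfl
  have h := ENNReal.lintegral_mul_prod_norm_pow_le (μ := μ) s (g := fun _ => ((1 : ℝ≥0) : ℝ≥0∞))
    (f := fun i a => (f i a : ℝ≥0∞)) (by fun_prop)
    (fun i _ => (measurable_from_top).aemeasurable) (1 - ∑ i ∈ s, r i) (p := r) (by ring)
    (by linarith) hr
  rw [hμ, avg_const] at h
  simp only [ENNReal.coe_one, ENNReal.one_rpow, one_mul] at h
  rw [← ENNReal.coe_le_coe, ← hμ]
  convert h using 1
  · refine lintegral_congr fun a => ?_
    push_cast
    exact Finset.prod_congr rfl fun i hi => ENNReal.coe_rpow_of_nonneg _ (hr i hi)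
  · push_cast
    refine Finset.prod_congr rfl fun i hi => ?_
    rw [hμ, ENNReal.coe_rpow_of_nonneg _ (hr i hi)]

lemma avg_rpow_le {α : Type*} [Fintype α] [Nonempty α] (f : α → ℝ≥0) {q : ℝ} (hq : 1 ≤ q) :
    avg f ^ q ≤ avg (fun a => f a ^ q) := by
  have hq0 : q ≠ 0 := by positivity
  have h := holder (Finset.univ : Finset Unit) (fun _ a => f a ^ q) (fun _ => q⁻¹)
    (fun _ _ => by positivity) (by simpa using inv_le_one_of_one_le₀ hq)
  simp only [Finset.univ_unique, Finset.prod_singleton, NNReal.rpow_rpow_inv hq0] at h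
  calc avg f ^ q ≤ (avg (fun a => f a ^ q) ^ q⁻¹) ^ q := by gcongr
    _ = _ := NNReal.rpow_inv_rpow hq0 _

lemma holder_two {α : Type*} [Fintype α] [Nonempty α] (f g : α → ℝ≥0) {p q : ℝ} (hp : 0 < p)
    (hq : 0 < q) (hpq : 1 / p + 1 / q ≤ 1) :
    avg (fun a => f a * g a) ≤
      avg (fun a => f a ^ q) ^ q⁻¹ * avg (fun a => g a ^ p) ^ p⁻¹ := by
  have h := holder (Finset.univ : Finset (Fin 2)) ![fun a => f a ^ q, fun a => g a ^ p]
    ![q⁻¹, p⁻¹] (fun i _ => by fin_cases i <;> simp <;> positivity)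
    (by simp at hpq ⊢; linarith)
  simpa [NNReal.rpow_rpow_inv hp.ne', NNReal.rpow_rpow_inv hq.ne'] using h

open Classical in
/-- Finner's inequality for a product of finite uniform probability spaces. `F e` depends only on
the coordinates `a` with `D e a`, and each coordinate is used by at most `1 / c` of the functions.
Coordinates are integrated out one at a time by `holder`. -/
lemma finner_s13 {α ι : Type*} [Fintype α] [Nonempty α] (s : Finset ι) (c : ℝ) (hc : 0 ≤ c) :
    ∀ (w : ℕ) (F : ι → (Fin w → α) → ℝ≥0) (D : ι → Fin w → Prop),
      (∀ e ∈ s, ∀ g g' : Fin w → α, (∀ a, D e a → g a = g' a) → F e g = F e g') →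
      (∀ a, ((s.filter fun e => D e a).card : ℝ) * c ≤ 1) →
      avg (fun g => ∏ e ∈ s, F e g ^ c) ≤ ∏ e ∈ s, avg (F e) ^ c := by
  intro w
  induction w with
  | zero =>
    intro F D _ _
    simp [avg]
  | succ w ih =>
    intro F D hdep hcount
    rw [avg_cons, avg_comm]
    -- `F'` is `F` with the first coordinate integrated out.
    let F' : ι → (Fin w → α) → ℝ≥0 := fun e z => avg (fun t => F e (Fin.cons t z))
    have hF' : ∀ e, avg (F e) = avg (F' e) := fun e => by
      rw [avg_cons, avg_comm]
    simp only [hF']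
    refine le_trans (avg_mono fun z => ?_) (ih F' (fun e a => D e a.succ) ?_ ?_)
    · have hsplit : ∀ f : ι → ℝ≥0, ∏ e ∈ s, f e =
          (∏ e ∈ s with D e 0, f e) * ∏ e ∈ s with ¬ D e 0, f e := fun f =>
        (Finset.prod_filter_mul_prod_filter_not s _ f).symm
      have hconst : ∀ t, ∏ e ∈ s with ¬ D e 0, F e (Fin.cons t z) ^ c =
          ∏ e ∈ s with ¬ D e 0, F' e z ^ c := by
        intro t
        refine Finset.prod_congr rfl fun e he => ?_
        rw [Finset.mem_filter] at he
        have : ∀ t', F e (Fin.cons t' z) = F e (Fin.cons t z) := fun t' => by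
          refine hdep e he.1 _ _ fun a ha => ?_
          induction a using Fin.cases with
          | zero => exact absurd ha he.2
          | succ a => simp
        simp only [F', this, avg_const]
      simp only [hsplit, hconst]
      rw [avg_mul_const]
      gcongr
      refine holder _ _ (fun _ => c) (fun _ _ => hc) ?_
      simpa using hcount 0
    · intro e he z z' hz
      refine congrArg avg (funext fun t => hdep e he _ _ fun a ha => ?_)
      induction a using Fin.cases with
      | zero => rfl
      | succ a => simpa using hz a ha
    · exact fun a => hcount a.succ

/-! ### The graph product and its symmetrisation -/

lemma graph_bound {v : ℕ} {α : Type*} [Fintype α] [Nonempty α] (E : Finset (Fin v × Fin v))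
    (hE : ∀ e ∈ E, e.1 ≠ e.2) (q : ℝ) (hq : 0 < q) (Q : α → α → ℝ≥0) :
    avg (fun g : Fin v → α => (∏ e ∈ E, Q (g e.1) (g e.2)) ^ q) ≤
      (avg (fun s => avg (fun t => Q s t ^ (q * (maxDeg E : ℝ)))) ^ (1 / (q * (maxDeg E : ℝ))))
        ^ (q * (E.card : ℝ)) := by
  classical
  have hdeg : ∀ a, (E.filter fun e => e.1 = a ∨ e.2 = a).card ≤ maxDeg E := fun a =>
    Finset.le_sup (f := fun a => (E.filter fun e => e.1 = a ∨ e.2 = a).card)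
      (Finset.mem_univ a)
  rcases E.eq_empty_or_nonempty with rfl | ⟨e₀, he₀⟩
  · simp only [Finset.prod_empty, NNReal.one_rpow, Finset.card_empty, Nat.cast_zero, mul_zero,
      NNReal.rpow_zero]
    rcases isEmpty_or_nonempty (Fin v → α) with h | h
    · simp [avg]
    · rw [avg_const]
  have hΔ : 0 < maxDeg E := lt_of_lt_of_le
    (Finset.card_pos.2 ⟨e₀, Finset.mem_filter.2 ⟨he₀, Or.inl rfl⟩⟩) (hdeg e₀.1)
  have hΔ' : (0 : ℝ) < maxDeg E := by exact_mod_cast hΔ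
  have h := finner_s13 (α := α) E (maxDeg E : ℝ)⁻¹ (by positivity) v
    (fun e g => Q (g e.1) (g e.2) ^ (q * (maxDeg E : ℝ))) (fun e a => e.1 = a ∨ e.2 = a)
    (fun e _ g g' hg => by rw [hg e.1 (Or.inl rfl), hg e.2 (Or.inr rfl)])
    (fun a => by
      rw [← div_eq_mul_inv, div_le_one hΔ']
      refine Nat.cast_le.2 (le_trans (le_of_eq ?_) (hdeg a))
      congr!)
  have hl : ∀ y : ℝ≥0, (y ^ (q * (maxDeg E : ℝ))) ^ (maxDeg E : ℝ)⁻¹ = y ^ q := fun y => by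
    rw [← NNReal.rpow_mul, mul_inv_cancel_right₀ hΔ'.ne']
  simp only [hl, NNReal.finsetProd_rpow] at h
  refine h.trans_eq ?_
  rw [Finset.prod_congr rfl fun e he =>
    avg_pair (hE e he) (fun s t => Q s t ^ (q * (maxDeg E : ℝ)))]
  rw [Finset.prod_const, ← NNReal.rpow_natCast, ← NNReal.rpow_mul, ← NNReal.rpow_mul]
  congr 1
  field_simp

/-- Convexity of `t ↦ t ^ q` reduces the symmetrised product to a single one, since permuting the
entries preserves the law of a uniform tuple. -/
lemma symQ_bound {v n : ℕ} [NeZero n] (E : Finset (Fin v × Fin v))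
    (hE : ∀ e ∈ E, e.1 ≠ e.2) (q : ℝ) (hq : 1 ≤ q) (Q : Fin n → Fin n → ℝ) :
    avg (fun g : Fin v → Fin n => ‖symQ E Q g‖₊ ^ q) ≤
      (avg (fun s => avg (fun t => ‖Q s t‖₊ ^ (q * (maxDeg E : ℝ))))
        ^ (1 / (q * (maxDeg E : ℝ)))) ^ (q * (E.card : ℝ)) := by
  have hS : ∀ g : Fin v → Fin n, ‖symQ E Q g‖₊ ≤
      avg (fun σ : Equiv.Perm (Fin v) => ∏ e ∈ E, ‖Q (g (σ e.1)) (g (σ e.2))‖₊) := by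
    intro g
    rw [symQ, avg, nnnorm_mul, nnnorm_inv, Fintype.card_perm, Fintype.card_fin]
    simp only [← nnnorm_prod, Real.nnnorm_natCast]
    gcongr
    exact nnnorm_sum_le _ _
  have hperm : ∀ σ : Equiv.Perm (Fin v),
      avg (fun g : Fin v → Fin n => (∏ e ∈ E, ‖Q (g (σ e.1)) (g (σ e.2))‖₊) ^ q) =
        avg (fun g : Fin v → Fin n => (∏ e ∈ E, ‖Q (g e.1) (g e.2)‖₊) ^ q) := fun σ =>
    avg_equiv (σ.symm.arrowCongr (Equiv.refl (Fin n)))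
      (fun g : Fin v → Fin n => (∏ e ∈ E, ‖Q (g e.1) (g e.2)‖₊) ^ q)
  calc avg (fun g : Fin v → Fin n => ‖symQ E Q g‖₊ ^ q)
      ≤ avg (fun g : Fin v → Fin n => avg (fun σ : Equiv.Perm (Fin v) =>
          (∏ e ∈ E, ‖Q (g (σ e.1)) (g (σ e.2))‖₊) ^ q)) := by
        refine avg_mono fun g => ?_
        refine le_trans ?_ (avg_rpow_le _ hq)
        gcongr
        exact hS g
    _ = avg (fun g : Fin v → Fin n => (∏ e ∈ E, ‖Q (g e.1) (g e.2)‖₊) ^ q) := by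
        rw [avg_comm]
        simp only [hperm, avg_const]
    _ ≤ _ := graph_bound E hE q (by linarith) (fun i j => ‖Q i j‖₊)

/-! ### The local magnetization -/

/-- Dropping the distinctness constraint and using the triangle inequality. -/
lemma locMag_bound {w n : ℕ} (E : Finset (Fin (w + 1) × Fin (w + 1)))
    (Q : Fin n → Fin n → ℝ) (x : Fin n → ℝ) (i : Fin n) :
    ‖locMag (w + 1) E Q x i‖₊ ≤ ((w + 1 : ℕ) : ℝ≥0) *
      avg (fun z : Fin w → Fin n =>
        ‖symQ E Q (Fin.cons i z)‖₊ * ∏ b, ‖x (z b)‖₊) := by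
  classical
  have hprod : ∀ g : Fin (w + 1) → Fin n,
      ∏ a ∈ Finset.univ.erase (0 : Fin (w + 1)), x (g a) = ∏ b : Fin w, x (g b.succ) := by
    intro g
    rw [Fin.univ_succ, Finset.cons_eq_insert, Finset.erase_insert (by simp), Finset.prod_map]
    rfl
  rw [locMag, avg, nnnorm_mul, div_eq_mul_inv, nnnorm_mul, mul_assoc]
  simp only [hprod, nnnorm_inv, nnnorm_pow, Real.nnnorm_natCast, Nat.add_sub_cancel,
    Fintype.card_pi, Fintype.card_fin, Finset.prod_const, Finset.card_univ, Nat.cast_pow]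
  gcongr
  refine (nnnorm_sum_le _ _).trans ?_
  calc _ ≤ ∑ g : Fin (w + 1) → Fin n with g 0 = i,
        ‖symQ E Q g * ∏ b : Fin w, x (g b.succ)‖₊ := by
        refine Finset.sum_le_sum_of_subset ?_
        intro g hg
        simp only [Finset.mem_filter, Finset.mem_univ, true_and] at hg ⊢
        exact hg.2
    _ = _ := by
        refine Finset.sum_nbij' (fun g => Fin.tail g) (fun z => Fin.cons i z) (by simp)
          (by simp) ?_ (by simp) ?_
        · intro g hg
          simp only [Finset.mem_filter, Finset.mem_univ, true_and] at hg
          rw [← hg, Fin.cons_self_tail]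
        · intro g hg
          simp only [Finset.mem_filter, Finset.mem_univ, true_and] at hg
          rw [nnnorm_mul, nnnorm_prod, ← hg, Fin.cons_self_tail]
          rfl

lemma main_nnreal {w n : ℕ} [NeZero n] (E : Finset (Fin (w + 1) × Fin (w + 1)))
    (hE : ∀ e ∈ E, e.1 ≠ e.2) (p q : ℝ) (hp : 1 < p) (hq : 1 < q) (hpq : 1/p + 1/q ≤ 1)
    (Q : Fin n → Fin n → ℝ) (x : Fin n → ℝ) :
    avg (fun i => ‖locMag (w + 1) E Q x i‖₊ ^ q) ≤
      ((w + 1 : ℕ) : ℝ≥0) ^ q * avg (fun j => ‖x j‖₊ ^ p) ^ (q * w / p) *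
      (avg (fun s => avg (fun t => ‖Q s t‖₊ ^ (q * (maxDeg E : ℝ))))
        ^ (1 / (q * (maxDeg E : ℝ)))) ^ (q * (E.card : ℝ)) := by
  have hq0 : 0 < q := by linarith
  have hp0 : 0 < p := by linarith
  have hx : avg (fun z : Fin w → Fin n => (∏ b, ‖x (z b)‖₊) ^ p) =
      avg (fun j => ‖x j‖₊ ^ p) ^ w := by
    simp only [← NNReal.finsetProd_rpow]
    exact avg_prod_pow w (fun j => ‖x j‖₊ ^ p)
  have hi : ∀ i, ‖locMag (w + 1) E Q x i‖₊ ^ q ≤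
      avg (fun z : Fin w → Fin n => ‖symQ E Q (Fin.cons i z)‖₊ ^ q) *
        (((w + 1 : ℕ) : ℝ≥0) ^ q * avg (fun j => ‖x j‖₊ ^ p) ^ (q * w / p)) := by
    intro i
    calc ‖locMag (w + 1) E Q x i‖₊ ^ q
        ≤ (((w + 1 : ℕ) : ℝ≥0) *
          (avg (fun z : Fin w → Fin n => ‖symQ E Q (Fin.cons i z)‖₊ ^ q) ^ q⁻¹ *
            avg (fun z : Fin w → Fin n => (∏ b, ‖x (z b)‖₊) ^ p) ^ p⁻¹)) ^ q := by
          refine NNReal.rpow_le_rpow ((locMag_bound E Q x i).trans ?_) hq0.le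
          gcongr
          exact holder_two _ _ hp0 hq0 hpq
      _ = _ := by
          rw [hx, NNReal.mul_rpow, NNReal.mul_rpow, NNReal.rpow_inv_rpow hq0.ne',
            ← NNReal.rpow_natCast, ← NNReal.rpow_mul, ← NNReal.rpow_mul,
            show (w : ℝ) * (p⁻¹ * q) = q * w / p by ring]
          ring
  refine (avg_mono hi).trans ?_
  rw [avg_mul_const, mul_comm,
    ← avg_cons (fun g : Fin (w + 1) → Fin n => ‖symQ E Q g‖₊ ^ q)]
  gcongr
  exact symQ_bound E hE q hq.le Q

/-- the deterministic bound
`(1/n) Σ_i |m_i|^q ≤ v^q ((1/n) Σ_j |x_j|^p)^{q(v−1)/p} ‖W_Q‖_{qΔ}^{q|E(H)|}`,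
where `‖W_Q‖_{L^r}^r = n^{−2} Σ_{i,j} |Q(i,j)|^r`. -/
theorem statement13
    (v : ℕ) [NeZero v] (hv : 2 ≤ v)
    (E : Finset (Fin v × Fin v)) (hE : ∀ e ∈ E, e.1 ≠ e.2)
    (p q : ℝ) (hp : 1 < p) (hq : 1 < q) (hpq : 1/p + 1/q ≤ 1)
    (n : ℕ) (hn : v ≤ n)
    (Q : Fin n → Fin n → ℝ) (hQsym : ∀ i j, Q i j = Q j i) (hQdiag : ∀ i, Q i i = 0)
    (x : Fin n → ℝ) :
    (n : ℝ)⁻¹ * ∑ i : Fin n, |locMag v E Q x i| ^ q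
      ≤ (v : ℝ) ^ q *
        ((n : ℝ)⁻¹ * ∑ j : Fin n, |x j| ^ p) ^ (q * ((v : ℝ) - 1) / p) *
        ((((n : ℝ) ^ 2)⁻¹ * ∑ i : Fin n, ∑ j : Fin n,
            |Q i j| ^ (q * (maxDeg E : ℝ))) ^ (1 / (q * (maxDeg E : ℝ))))
          ^ (q * (E.card : ℝ)) := by
  -- With `v = w + 1`, the instance in the statement agrees with the canonical one by proof
  -- irrelevance.
  obtain ⟨w, rfl⟩ : ∃ w, v = w + 1 := ⟨v - 1, by omega⟩
  have : NeZero n := ⟨by omega⟩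
  have h := NNReal.coe_le_coe.2 (main_nnreal E hE p q hp hq hpq Q x)
  simp only [avg, ← Finset.mul_sum, Fintype.card_fin] at h
  push_cast at h
  simp only [Real.norm_eq_abs] at h
  have hcast : ((w + 1 : ℕ) : ℝ) - 1 = w := by push_cast; ring
  rw [hcast, pow_two, mul_inv, mul_assoc (n : ℝ)⁻¹ (n : ℝ)⁻¹]
  push_cast
  exact h

end GibbsMulti
end
end

section
/- Let (X, d_X) and (Y, d_Y) be Polish spaces, and let (ξ_n) be a sequence of X-valued random variables such that d_X(ξ_n, F) → 0 in probability for some closed set F ⊆ X. Assume there exists a compact set K ⊆ X with P(ξ_n ∉ K) → 0 as n → ∞. Let g : X → Y be Borel measurable and such that its restriction to K is continuous. Then d_Y(g(ξ_n), g(F)) → 0 in probability. -/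
open MeasureTheory Filter Set TopologicalSpace
open scoped ENNReal NNReal

/-!
The points of `K` whose image stays at distance at least `ε` from `g(F)` form a compact set `C`,
by continuity of `g` on `K`, and `C` misses `F`. Hence the distance to `F` is bounded below on `C`
by some `δ > 0`, so `d_Y(g(ξ_n), g(F)) ≥ ε` forces `ξ_n ∉ K` or `d_X(ξ_n, F) ≥ δ`,
and a union bound concludes.
-/

/-- Deterministic core of the argument: points of `K` close to `F` are mapped close to `g(F)`,
uniformly on `K`. The sets `K` and `F` need not meet. -/
lemma exists_pos_le_infDist_of_le_infDist_image {X Y : Type*} [MetricSpace X] [MetricSpace Y]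
    {F K : Set X} (hF : IsClosed F) (hFne : F.Nonempty) (hK : IsCompact K)
    {g : X → Y} (hgK : ContinuousOn g K) {ε : ℝ} (hε : 0 < ε) :
    ∃ δ : ℝ, 0 < δ ∧
      ∀ x ∈ K, ε ≤ Metric.infDist (g x) (g '' F) → δ ≤ Metric.infDist x F := by
  have hclosed : IsClosed {y : Y | ε ≤ Metric.infDist y (g '' F)} :=
    isClosed_le continuous_const (Metric.continuous_infDist_pt _)
  have hC : IsCompact (K ∩ g ⁻¹' {y : Y | ε ≤ Metric.infDist y (g '' F)}) :=
    hK.of_isClosed_subset (hgK.preimage_isClosed_of_isClosed hK.isClosed hclosed)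
      inter_subset_left
  rcases (K ∩ g ⁻¹' {y : Y | ε ≤ Metric.infDist y (g '' F)}).eq_empty_or_nonempty with h | h
  · refine ⟨1, one_pos, fun x hx hxε => ?_⟩
    have hmem : x ∈ K ∩ g ⁻¹' {y : Y | ε ≤ Metric.infDist y (g '' F)} := ⟨hx, hxε⟩
    rw [h] at hmem
    exact hmem.elim
  · obtain ⟨x₀, hx₀, hmin⟩ := hC.exists_isMinOn h (Metric.continuous_infDist_pt F).continuousOn
    refine ⟨Metric.infDist x₀ F, ?_, fun x hx hxε => hmin ⟨hx, hxε⟩⟩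
    refine (hF.notMem_iff_infDist_pos hFne).1 fun hx₀F => ?_
    have hle : ε ≤ Metric.infDist (g x₀) (g '' F) := hx₀.2
    rw [Metric.infDist_zero_of_mem (mem_image_of_mem g hx₀F)] at hle
    exact hle.not_gt hε

/-- continuous mapping for sets: if `d_X(ξ_n, F) → 0` in probability
for a closed set `F`, the `ξ_n` eventually live on a compact `K` with high probability,
and `g` is Borel measurable and continuous on `K`, then `d_Y(g(ξ_n), g(F)) → 0` in
probability. -/
theorem statement15
    {X Y : Type*} [MetricSpace X] [SeparableSpace X] [CompleteSpace X] [MeasurableSpace X] [BorelSpace X]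
    [MetricSpace Y] [SeparableSpace Y] [CompleteSpace Y] [MeasurableSpace Y] [BorelSpace Y]
    {Ω : Type*} [MeasurableSpace Ω] (P : Measure Ω) [IsProbabilityMeasure P]
    (ξ : ℕ → Ω → X) (hξ : ∀ n, Measurable (ξ n))
    (F : Set X) (hF : IsClosed F) (hFne : F.Nonempty)
    (hdist : ∀ ε : ℝ, 0 < ε →
      Tendsto (fun n => P {ω | ε ≤ Metric.infDist (ξ n ω) F}) atTop (nhds 0))
    (K : Set X) (hK : IsCompact K)
    (hKtight : Tendsto (fun n => P {ω | ξ n ω ∉ K}) atTop (nhds 0))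
    (g : X → Y) (hg : Measurable g) (hgK : ContinuousOn g K) :
    ∀ ε : ℝ, 0 < ε →
      Tendsto (fun n => P {ω | ε ≤ Metric.infDist (g (ξ n ω)) (g '' F)})
        atTop (nhds 0) := by
  intro ε hε
  obtain ⟨δ, hδ, hδK⟩ := exists_pos_le_infDist_of_le_infDist_image hF hFne hK hgK hε
  have hsum := hKtight.add (hdist δ hδ)
  rw [add_zero] at hsum
  refine tendsto_of_tendsto_of_tendsto_of_le_of_le tendsto_const_nhds hsum
    (fun _ => zero_le) fun n => (measure_mono fun ω hω => ?_).trans (measure_union_le _ _)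
  by_cases hωK : ξ n ω ∈ K
  · exact Or.inr (hδK _ hωK hω)
  · exact Or.inl hωK
end

section
/- Let U ∼ Unif[0,1] and p ≥ 1. Suppose (f_n)_{n≥1} is a sequence of measurable real-valued functions on [0,1] such that limsup_n E|f_n(U)|^p < ∞ and the pairs (U, f_n(U)) converge in distribution to (U, f_∞(U)) for some measurable f_∞ : [0,1] → ℝ. Then for every p̃ ∈ (0, p), E|f_n(U) − f_∞(U)|^{p̃} → 0 as n → ∞. -/
/-!
The proof has two parts: the joint convergence in law with a common first coordinate forces
`f n → flim` in measure, and the bounded `p`-th moments upgrade this to convergence of the moments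
of order `pt < p`.

For the first part (`tendsto_integral_sq_arctan_sub`), put `g n = arctan ∘ f n` and
`g = arctan ∘ flim`, and let `ψ` be a bounded continuous function with `∫ |g - ψ|` small. With the
bounded continuous test function `H (x, y) = (arctan y)² - 2 ψ(x) arctan y`,
`(g n - g)² = H (x, f n x) - H (x, flim x) + 2 (g n - g) (ψ - g)`, so `g n → g` in `L²`. Hence every
subsequence has a further one along which `g n → g` almost everywhere, and applying `tan` gives
`f n → flim` almost everywhere along it.

For the second part (`tendsto_lintegral_rpow_of_tendsto_ae`), Fatou's lemma bounds the `p`-th moment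
of `flim`, hence those of `d n = |f n - flim|`. Since
`d ^ pt ≤ min d K ^ pt + K ^ (pt - p) * d ^ p`, dominated convergence handles the first summand for
each fixed `K`, and the second is small uniformly in `n` once `K` is large.
-/

open MeasureTheory Filter Set
open scoped ENNReal NNReal
open scoped Topology BoundedContinuousFunction

theorem abs_arctan_le (y : ℝ) : |Real.arctan y| ≤ Real.pi / 2 :=
  abs_le.2 ⟨(Real.neg_pi_div_two_lt_arctan y).le, (Real.arctan_lt_pi_div_two y).le⟩

theorem integrable_arctan_comp {μ : Measure ℝ} [IsFiniteMeasure μ] {u : ℝ → ℝ}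
    (hu : Measurable u) : Integrable (fun x => Real.arctan (u x)) μ :=
  Integrable.of_bound (Real.measurable_arctan.comp hu).aestronglyMeasurable (Real.pi / 2)
    (Eventually.of_forall fun x => abs_arctan_le (u x))

theorem integrable_sq_arctan_sub {μ : Measure ℝ} [IsFiniteMeasure μ] {u v : ℝ → ℝ}
    (hu : Measurable u) (hv : Measurable v) :
    Integrable (fun x => (Real.arctan (u x) - Real.arctan (v x)) ^ 2) μ := by
  refine Integrable.of_bound (C := Real.pi ^ 2) (((Real.measurable_arctan.comp hu).sub
    (Real.measurable_arctan.comp hv)).pow_const 2).aestronglyMeasurable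
    (Eventually.of_forall fun x => ?_)
  rw [Real.norm_eq_abs, abs_pow]
  have h := abs_sub (Real.arctan (u x)) (Real.arctan (v x))
  have h1 := abs_arctan_le (u x)
  have h2 := abs_arctan_le (v x)
  exact pow_le_pow_left₀ (abs_nonneg _) (by linarith) 2

/-- The test function `(x, y) ↦ (arctan y)² - 2 ψ(x) arctan y`. -/
noncomputable def arctanTest (ψ : ℝ →ᵇ ℝ) : (ℝ × ℝ) →ᵇ ℝ :=
  BoundedContinuousFunction.ofNormedAddCommGroup
    (fun z => Real.arctan z.2 ^ 2 - 2 * ψ z.1 * Real.arctan z.2)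
    (by fun_prop)
    ((Real.pi / 2) ^ 2 + 2 * ‖ψ‖ * (Real.pi / 2))
    (by
      intro z
      refine (norm_sub_le _ _).trans (add_le_add ?_ ?_)
      · rw [Real.norm_eq_abs, abs_pow]
        exact pow_le_pow_left₀ (abs_nonneg _) (abs_arctan_le _) 2
      · rw [norm_mul, norm_mul, Real.norm_two]
        have h1 := ψ.norm_coe_le_norm z.1
        have h2 : ‖Real.arctan z.2‖ ≤ Real.pi / 2 := abs_arctan_le _
        gcongr)

theorem arctanTest_apply (ψ : ℝ →ᵇ ℝ) (x y : ℝ) :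
    arctanTest ψ (x, y) = Real.arctan y ^ 2 - 2 * ψ x * Real.arctan y := rfl

theorem integrable_comp_graph {μ : Measure ℝ} [IsFiniteMeasure μ] (h : (ℝ × ℝ) →ᵇ ℝ) {u : ℝ → ℝ}
    (hu : Measurable u) : Integrable (fun x => h (x, u x)) μ :=
  Integrable.of_bound
    (h.continuous.measurable.comp (measurable_id.prodMk hu)).aestronglyMeasurable ‖h‖
    (Eventually.of_forall fun _ => h.norm_coe_le_norm _)

/-- Convergence in law of the graphs implies `L²` convergence after the bounded transform
`arctan`. -/
theorem tendsto_integral_sq_arctan_sub {μ : Measure ℝ} [IsFiniteMeasure μ] [μ.WeaklyRegular]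
    {f : ℕ → ℝ → ℝ} (hf : ∀ n, Measurable (f n)) {flim : ℝ → ℝ} (hflim : Measurable flim)
    (hconv : ∀ h : (ℝ × ℝ) →ᵇ ℝ,
      Tendsto (fun n => ∫ x, h (x, f n x) ∂μ) atTop (𝓝 (∫ x, h (x, flim x) ∂μ))) :
    Tendsto (fun n => ∫ x, (Real.arctan (f n x) - Real.arctan (flim x)) ^ 2 ∂μ)
      atTop (𝓝 0) := by
  have hnn : ∀ n, 0 ≤ ∫ x, (Real.arctan (f n x) - Real.arctan (flim x)) ^ 2 ∂μ :=
    fun n => integral_nonneg fun x => sq_nonneg _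
  rw [Metric.tendsto_atTop]
  intro ε hε
  have hpi := Real.pi_pos
  obtain ⟨ψ, hψ, hψi⟩ := (integrable_arctan_comp (μ := μ)
    hflim).exists_boundedContinuous_integral_sub_le
    (ε := ε / (4 * Real.pi)) (by positivity)
  have hlim := hconv (arctanTest ψ)
  rw [Metric.tendsto_atTop] at hlim
  obtain ⟨N, hN⟩ := hlim (ε / 2) (by positivity)
  refine ⟨N, fun n hn => ?_⟩
  rw [Real.dist_eq, sub_zero, abs_of_nonneg (hnn n)]
  have h1 := hN n hn
  rw [Real.dist_eq] at h1
  have hin := integrable_comp_graph (μ := μ) (arctanTest ψ) (hf n)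
  have hil := integrable_comp_graph (μ := μ) (arctanTest ψ) hflim
  have hid : Integrable (fun x => ‖Real.arctan (flim x) - ψ x‖) μ :=
    ((integrable_arctan_comp hflim).sub hψi).norm
  have hmono : ∫ x, (Real.arctan (f n x) - Real.arctan (flim x)) ^ 2 ∂μ ≤
      ∫ x, (arctanTest ψ (x, f n x) - arctanTest ψ (x, flim x)
        + 2 * Real.pi * ‖Real.arctan (flim x) - ψ x‖) ∂μ := by
    refine integral_mono (integrable_sq_arctan_sub (hf n) hflim)
      ((hin.sub hil).add (hid.const_mul _)) fun x => ?_
    simp only [arctanTest_apply, Real.norm_eq_abs]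
    have ha := abs_sub (Real.arctan (f n x)) (Real.arctan (flim x))
    have hb := abs_arctan_le (f n x)
    have hc := abs_arctan_le (flim x)
    have hd : |(Real.arctan (f n x) - Real.arctan (flim x)) * (Real.arctan (flim x) - ψ x)| ≤
        Real.pi * |Real.arctan (flim x) - ψ x| := by
      rw [abs_mul]
      exact mul_le_mul_of_nonneg_right (by linarith) (abs_nonneg _)
    have he := (abs_le.1 hd).1
    nlinarith
  have hisub : Integrable (fun x => arctanTest ψ (x, f n x) - arctanTest ψ (x, flim x)) μ :=
    hin.sub hil
  rw [integral_add hisub (hid.const_mul _), integral_sub hin hil,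
    integral_const_mul] at hmono
  have h2 : 2 * Real.pi * ∫ x, ‖Real.arctan (flim x) - ψ x‖ ∂μ ≤ ε / 2 := by
    calc _ ≤ 2 * Real.pi * (ε / (4 * Real.pi)) := by gcongr
      _ = ε / 2 := by field_simp; norm_num
  have h3 := (abs_lt.1 h1).2
  linarith

/-- Splitting of `d ^ q` at the level `K`, for `q ≤ p`. -/
theorem rpow_le_min_rpow_add {d K p q : ℝ} (hd : 0 ≤ d) (hK : 0 < K) (hqp : q ≤ p) :
    d ^ q ≤ min d K ^ q + K ^ (q - p) * d ^ p := by
  rcases le_total d K with h | h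
  · rw [min_eq_left h]
    have := mul_nonneg (Real.rpow_nonneg hK.le (q - p)) (Real.rpow_nonneg hd p)
    linarith
  · have hd' : 0 < d := hK.trans_le h
    have h1 : d ^ q = d ^ (q - p) * d ^ p := by
      rw [← Real.rpow_add hd']; congr 1; ring
    have h2 : d ^ (q - p) ≤ K ^ (q - p) := Real.rpow_le_rpow_of_nonpos hK h (by linarith)
    have h3 := mul_le_mul_of_nonneg_right h2 (Real.rpow_nonneg hd p)
    have h4 : 0 ≤ min d K ^ q := Real.rpow_nonneg (le_min hd hK.le) q
    linarith

theorem abs_sub_rpow_le {p : ℝ} (hp : 0 ≤ p) (a b : ℝ) :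
    |a - b| ^ p ≤ 2 ^ p * (|a| ^ p + |b| ^ p) := by
  have h0 : |a - b| ≤ 2 * max |a| |b| := by
    have := abs_sub a b
    have := le_max_left |a| |b|
    have := le_max_right |a| |b|
    linarith
  have hm : 0 ≤ max |a| |b| := le_max_of_le_left (abs_nonneg a)
  have h1 : |a - b| ^ p ≤ 2 ^ p * (max |a| |b|) ^ p := by
    rw [← Real.mul_rpow (by norm_num) hm]
    exact Real.rpow_le_rpow (abs_nonneg _) h0 hp
  refine h1.trans (mul_le_mul_of_nonneg_left ?_ (by positivity))
  have ha := Real.rpow_nonneg (abs_nonneg a) p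
  have hb := Real.rpow_nonneg (abs_nonneg b) p
  rcases max_choice |a| |b| with h | h <;> rw [h] <;> linarith

/-- Almost everywhere convergence together with a bound on the `p`-th moments gives convergence in
mean of every order `q < p`. -/
theorem tendsto_lintegral_rpow_of_tendsto_ae {μ : Measure ℝ} [IsFiniteMeasure μ]
    {p q : ℝ} (hq : 0 < q) (hqp : q < p)
    {f : ℕ → ℝ → ℝ} (hf : ∀ n, Measurable (f n)) {g : ℝ → ℝ} (hg : Measurable g)
    {C : ℝ≥0∞} (hC : C ≠ ⊤) (hbd : ∀ᶠ n in atTop, ∫⁻ x, ENNReal.ofReal (|f n x| ^ p) ∂μ ≤ C)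
    (hae : ∀ᵐ x ∂μ, Tendsto (fun n => f n x) atTop (𝓝 (g x))) :
    Tendsto (fun n => ∫⁻ x, ENNReal.ofReal (|f n x - g x| ^ q) ∂μ) atTop (𝓝 0) := by
  have hp : 0 < p := hq.trans hqp
  have hgC : ∫⁻ x, ENNReal.ofReal (|g x| ^ p) ∂μ ≤ C := by
    calc ∫⁻ x, ENNReal.ofReal (|g x| ^ p) ∂μ
        = ∫⁻ x, liminf (fun n => ENNReal.ofReal (|f n x| ^ p)) atTop ∂μ := by
          refine lintegral_congr_ae ?_
          filter_upwards [hae] with x hx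
          exact (ENNReal.tendsto_ofReal (hx.abs.rpow_const (Or.inr hp.le))).liminf_eq.symm
      _ ≤ liminf (fun n => ∫⁻ x, ENNReal.ofReal (|f n x| ^ p) ∂μ) atTop :=
          lintegral_liminf_le fun n => by have := hf n; fun_prop
      _ ≤ liminf (fun _ : ℕ => C) atTop := liminf_le_liminf hbd
      _ = C := by simp
  set D : ℝ≥0∞ := ENNReal.ofReal (2 ^ p) * (C + C) with hD
  have hDtop : D ≠ ⊤ := ENNReal.mul_ne_top ENNReal.ofReal_ne_top (ENNReal.add_ne_top.2 ⟨hC, hC⟩)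
  have hdC : ∀ᶠ n in atTop, ∫⁻ x, ENNReal.ofReal (|f n x - g x| ^ p) ∂μ ≤ D := by
    filter_upwards [hbd] with n hn
    calc ∫⁻ x, ENNReal.ofReal (|f n x - g x| ^ p) ∂μ
        ≤ ∫⁻ x, ENNReal.ofReal (2 ^ p) *
            (ENNReal.ofReal (|f n x| ^ p) + ENNReal.ofReal (|g x| ^ p)) ∂μ := by
          refine lintegral_mono fun x => ?_
          rw [← ENNReal.ofReal_add (by positivity) (by positivity),
            ← ENNReal.ofReal_mul (by positivity)]
          exact ENNReal.ofReal_le_ofReal (abs_sub_rpow_le hp.le _ _)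
      _ = ENNReal.ofReal (2 ^ p) * (∫⁻ x, ENNReal.ofReal (|f n x| ^ p) ∂μ
            + ∫⁻ x, ENNReal.ofReal (|g x| ^ p) ∂μ) := by
          have := hf n
          rw [lintegral_const_mul _ (by fun_prop), lintegral_add_left (by fun_prop)]
      _ ≤ D := by rw [hD]; gcongr
  rw [ENNReal.tendsto_nhds_zero]
  intro ε hε
  have hε2 : 0 < ε / 2 := ENNReal.half_pos (ne_of_gt hε)
  -- the truncation level: `K ^ (q - p) * D` is small because `q < p`
  obtain ⟨K, hK, hKD⟩ : ∃ K : ℝ, 0 < K ∧ ENNReal.ofReal (K ^ (q - p)) * D ≤ ε / 2 := by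
    have h1 : Tendsto (fun K : ℝ => ENNReal.ofReal (K ^ (q - p)) * D) atTop (𝓝 0) := by
      have h2 : Tendsto (fun K : ℝ => K ^ (q - p)) atTop (𝓝 0) := by
        simpa using tendsto_rpow_neg_atTop (sub_pos.2 hqp)
      simpa using ENNReal.Tendsto.mul_const (ENNReal.tendsto_ofReal h2) (Or.inr hDtop)
    obtain ⟨K, h, hK⟩ := (((ENNReal.tendsto_nhds_zero.1 h1) _ hε2).and
      (eventually_gt_atTop 0)).exists
    exact ⟨K, hK, h⟩
  have htrunc : Tendsto (fun n => ∫⁻ x, ENNReal.ofReal (min |f n x - g x| K ^ q) ∂μ)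
      atTop (𝓝 0) := by
    have h := tendsto_lintegral_of_dominated_convergence (μ := μ)
      (F := fun n x => ENNReal.ofReal (min |f n x - g x| K ^ q)) (f := fun _ => 0)
      (fun _ => ENNReal.ofReal (K ^ q)) (fun n => by have := hf n; fun_prop)
      (fun n => Eventually.of_forall fun x => ENNReal.ofReal_le_ofReal
        (Real.rpow_le_rpow (le_min (abs_nonneg _) hK.le) (min_le_right _ _) hq.le))
      (by simpa using ENNReal.mul_ne_top ENNReal.ofReal_ne_top (measure_ne_top μ _))
      (by
        filter_upwards [hae] with x hx
        have h1 : Tendsto (fun n => min |f n x - g x| K ^ q) atTop (𝓝 (min |g x - g x| K ^ q)) :=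
          ((hx.sub_const _).abs.min tendsto_const_nhds).rpow_const (Or.inr hq.le)
        rw [sub_self, abs_zero, min_eq_left hK.le, Real.zero_rpow hq.ne'] at h1
        simpa using ENNReal.tendsto_ofReal h1)
    simpa using h
  filter_upwards [(ENNReal.tendsto_nhds_zero.1 htrunc) _ hε2, hdC] with n h1 h2
  calc ∫⁻ x, ENNReal.ofReal (|f n x - g x| ^ q) ∂μ
      ≤ ∫⁻ x, (ENNReal.ofReal (min |f n x - g x| K ^ q) +
          ENNReal.ofReal (K ^ (q - p)) * ENNReal.ofReal (|f n x - g x| ^ p)) ∂μ := by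
        refine lintegral_mono fun x => ?_
        rw [← ENNReal.ofReal_mul (by positivity),
          ← ENNReal.ofReal_add (by positivity) (by positivity)]
        exact ENNReal.ofReal_le_ofReal (rpow_le_min_rpow_add (abs_nonneg _) hK hqp.le)
    _ = ∫⁻ x, ENNReal.ofReal (min |f n x - g x| K ^ q) ∂μ +
          ENNReal.ofReal (K ^ (q - p)) * ∫⁻ x, ENNReal.ofReal (|f n x - g x| ^ p) ∂μ := by
        have := hf n
        rw [lintegral_add_left (by fun_prop), lintegral_const_mul _ (by fun_prop)]
    _ ≤ ε / 2 + ENNReal.ofReal (K ^ (q - p)) * D := by gcongr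
    _ ≤ ε / 2 + ε / 2 := by gcongr
    _ = ε := ENNReal.add_halves ε

theorem tendsto_of_tendsto_sq_arctan_sub {u : ℕ → ℝ} {a : ℝ}
    (h : Tendsto (fun n => (Real.arctan (u n) - Real.arctan a) ^ 2) atTop (𝓝 0)) :
    Tendsto u atTop (𝓝 a) := by
  have h1 : Tendsto (fun n => |Real.arctan (u n) - Real.arctan a|) atTop (𝓝 0) := by
    simpa [Real.sqrt_sq_eq_abs] using h.sqrt
  have h2 : Tendsto (fun n => Real.arctan (u n)) atTop (𝓝 (Real.arctan a)) :=
    tendsto_sub_nhds_zero_iff.1 ((tendsto_zero_iff_abs_tendsto_zero _).2 h1)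
  have h3 := (Real.continuousAt_tan.2 (Real.cos_arctan_pos a).ne').tendsto.comp h2
  simpa [Function.comp_def, Real.tan_arctan] using h3

/-- if `U ~ Unif[0,1]`, `limsup_n E|f_n(U)|^p < ∞` and
`(U, f_n(U)) → (U, f_∞(U))` in distribution, then `E|f_n(U) − f_∞(U)|^{p̃} → 0` for every
`0 < p̃ < p`. -/
theorem statement16
    (p : ℝ) (hp : 1 ≤ p)
    (f : ℕ → ℝ → ℝ) (hf : ∀ n, Measurable (f n))
    (flim : ℝ → ℝ) (hflim : Measurable flim)
    (hbd : Filter.limsup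
        (fun n => ∫⁻ x in Icc (0:ℝ) 1, ENNReal.ofReal (|f n x| ^ p)) Filter.atTop < ⊤)
    (hconv : ∀ h : BoundedContinuousFunction (ℝ × ℝ) ℝ,
      Tendsto (fun n => ∫ x in Icc (0:ℝ) 1, h (x, f n x))
        atTop (nhds (∫ x in Icc (0:ℝ) 1, h (x, flim x)))) :
    ∀ pt : ℝ, 0 < pt → pt < p →
      Tendsto (fun n => ∫⁻ x in Icc (0:ℝ) 1, ENNReal.ofReal (|f n x - flim x| ^ pt))
        atTop (nhds 0) := by
  intro pt hpt hptp
  obtain ⟨C, hC1, hC2⟩ := exists_between hbd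
  have hC := eventually_lt_of_limsup_lt hC1
  have hL2 := tendsto_integral_sq_arctan_sub hf hflim hconv
  have hmeas : TendstoInMeasure (volume.restrict (Icc (0:ℝ) 1))
      (fun n x => (Real.arctan (f n x) - Real.arctan (flim x)) ^ 2) atTop (fun _ => (0:ℝ)) := by
    refine tendstoInMeasure_of_tendsto_eLpNorm (p := 1) one_ne_zero
      (fun n => (integrable_sq_arctan_sub (hf n) hflim).aestronglyMeasurable)
      aestronglyMeasurable_const ?_
    have h := ENNReal.tendsto_ofReal hL2
    rw [ENNReal.ofReal_zero] at h
    refine h.congr fun n => ?_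
    rw [eLpNorm_one_eq_lintegral_enorm]
    simp only [Pi.sub_apply, sub_zero]
    rw [← ofReal_integral_norm_eq_lintegral_enorm (integrable_sq_arctan_sub (hf n) hflim)]
    simp
  refine tendsto_of_subseq_tendsto fun ns hns => ?_
  have hsub : TendstoInMeasure (volume.restrict (Icc (0:ℝ) 1))
      (fun n x => (Real.arctan (f (ns n) x) - Real.arctan (flim x)) ^ 2) atTop
      (fun _ => (0:ℝ)) := fun ε hε => (hmeas ε hε).comp hns
  obtain ⟨ms, hms, hae⟩ := hsub.exists_seq_tendsto_ae
  refine ⟨ms, tendsto_lintegral_rpow_of_tendsto_ae hpt hptp (fun n => hf (ns (ms n))) hflim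
    hC2.ne ((hns.comp hms.tendsto_atTop).eventually (hC.mono fun _ h => h.le)) ?_⟩
  filter_upwards [hae] with x hx
  exact tendsto_of_tendsto_sq_arctan_sub hx
end
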